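/- arXiv:1005.5185 — 3 statements merged into one kernel-verified Lean document; each statement's English description precedes it below -/
import Mathlib

section
/- Let i be an integer with 2 < i ≤ n. Let r₁, r₂, r₃ be positive integers, M an r₂×r₁ matrix over B, and N an (r₃−1)×(r₂−1) matrix over B, and suppose that the sequence B^{r₃} → B^{r₂} → B^{r₁}, whose maps are right multiplication by the r₃×r₂ matrix N ⋆ Γ_i and by M respectively, is exact at B^{r₂}. Then the sequence B^{r₃+1} → B^{r₂+1} → B^{r₁+1}, whose maps are right multiplication by the matrix N ⋆ Γ_i ⋆ Γ_{i−2} and by the matrix M ⋆ Γ_{i−1} respectively, is exact at B^{r₂+1}. -/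
noncomputable section

inductive Gen (n : ℕ) : Type
  | a : Fin (n+1) → Gen n
  | b : Fin (n+1) → Gen n
  | c : Fin (n+1) → Gen n

variable (K : Type) [Field K] (n : ℕ)

/-- The tensor algebra `T(V)` on the span of the generators, i.e. the free algebra. -/
abbrev FA := FreeAlgebra K (Gen n)

/-- `a_i`, with the convention that out-of-range indices give `0`. -/
def ga (i : ℤ) : FA K n :=
  if h : 0 ≤ i ∧ i ≤ (n : ℤ) then FreeAlgebra.ι K (Gen.a ⟨i.toNat, by omega⟩) else 0

def gb (i : ℤ) : FA K n :=
  if h : 0 ≤ i ∧ i ≤ (n : ℤ) then FreeAlgebra.ι K (Gen.b ⟨i.toNat, by omega⟩) else 0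

def gc (i : ℤ) : FA K n :=
  if h : 0 ≤ i ∧ i ≤ (n : ℤ) then FreeAlgebra.ι K (Gen.c ⟨i.toNat, by omega⟩) else 0

/-- The set `R` of defining relations. -/
def rels : Set (FA K n) :=
  { x | x = ga K n n * gb K n n * gc K n n ∨ x = gc K n 0 * ga K n 0 ∨
      ∃ i : ℕ, i < n ∧
        (x = ga K n i * gb K n i * gc K n i + gc K n (i+1) * ga K n (i+1) * gb K n (i+1) ∨
         x = gb K n (i+1) * gc K n (i+1) * ga K n (i+1) ∨
         x = gc K n i * gc K n (i+1) ∨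
         x = gb K n (i+1) * ga K n i) }

/-- The relation whose ring-quotient is `B = T(V)/⟨R⟩`. -/
def BRel (x y : FA K n) : Prop := x ∈ rels K n ∧ y = 0

/-- The algebra `B = T(V)/⟨R⟩`. -/
abbrev B := RingQuot (BRel K n)

/-- The quotient map `π_B : T(V) → B`. -/
def πB : FA K n →ₐ[K] B K n := RingQuot.mkAlgHom K (BRel K n)

/-- The image of `a_i` in `B` (zero for out-of-range indices). -/
def aB (i : ℤ) : B K n := πB K n (ga K n i)
def bB (i : ℤ) : B K n := πB K n (gb K n i)
def cB (i : ℤ) : B K n := πB K n (gc K n i)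

/-- The left annihilator of `x`, as a left ideal of `B`. -/
def lann (x : B K n) : Ideal (B K n) where
  carrier := {w | w * x = 0}
  add_mem' := by
    intro a b ha hb
    simp only [Set.mem_setOf_eq, add_mul] at *
    rw [ha, hb, add_zero]
  zero_mem' := by simp
  smul_mem' := by
    intro c w hw
    simp only [Set.mem_setOf_eq, smul_eq_mul, mul_assoc] at *
    rw [hw, mul_zero]

end

/-- The star product `M ⋆ N` of an `a×b` matrix and a `c×d` matrix: the `(a+c-1)×(b+d)`
matrix with `M` in the top-left `a×b` corner, `N` occupying rows `a,…,a+c-1` and columns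
`b+1,…,b+d`, and zeros elsewhere. -/
def starM {R : Type} [Semiring R] {a b c d : ℕ}
    (M : Matrix (Fin a) (Fin b) R) (N : Matrix (Fin c) (Fin d) R) :
    Matrix (Fin (a + c - 1)) (Fin (b + d)) R :=
  Matrix.of fun i j =>
    if hij : i.val < a ∧ j.val < b then M ⟨i.val, hij.1⟩ ⟨j.val, hij.2⟩
    else if hij' : a - 1 ≤ i.val ∧ b ≤ j.val then
      N ⟨i.val - (a - 1), by have := i.isLt; omega⟩ ⟨j.val - b, by have := j.isLt; omega⟩
    else 0

/-- The column matrix `Γ_i` for `i ≥ 1`, with entries `a_i b_i` and `c_{i-1}`. -/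
def GammaP (K : Type) [Field K] (n : ℕ) (i : ℤ) : Matrix (Fin 2) (Fin 1) (B K n) :=
  !![aB K n i * bB K n i; cB K n (i - 1)]


set_option linter.unnecessarySimpa false
set_option linter.unusedSimpArgs false

namespace S12

variable {K : Type} [Field K] {n : ℕ}

def X (K : Type) [Field K] {n : ℕ} (g : Gen n) : B K n := πB K n (FreeAlgebra.ι K g)

lemma aB_eq (j : ℕ) (h : j < n + 1) : aB K n (j : ℤ) = X K (Gen.a ⟨j, h⟩) := by
  unfold aB ga X
  rw [dif_pos (by omega)]
  simp

lemma bB_eq (j : ℕ) (h : j < n + 1) : bB K n (j : ℤ) = X K (Gen.b ⟨j, h⟩) := by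
  unfold bB gb X
  rw [dif_pos (by omega)]
  simp

lemma cB_eq (j : ℕ) (h : j < n + 1) : cB K n (j : ℤ) = X K (Gen.c ⟨j, h⟩) := by
  unfold cB gc X
  rw [dif_pos (by omega)]
  simp

lemma pi_rel {x : FA K n} (h : x ∈ rels K n) : πB K n x = 0 := by
  have := RingQuot.mkAlgHom_rel K (s := BRel K n) (x := x) (y := 0) ⟨h, rfl⟩
  simpa [πB] using this

lemma rel_n : aB K n n * bB K n n * cB K n n = 0 := by
  have := pi_rel (K := K) (n := n) (x := ga K n n * gb K n n * gc K n n) (Or.inl rfl)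
  simpa [aB, bB, cB] using this

lemma rel_0 : cB K n 0 * aB K n 0 = 0 := by
  have := pi_rel (K := K) (n := n) (x := gc K n 0 * ga K n 0) (Or.inr (Or.inl rfl))
  simpa [aB, bB, cB] using this

lemma rel_abc (i : ℕ) (h : i < n) : aB K n i * bB K n i * cB K n i
    + cB K n (i+1) * aB K n (i+1) * bB K n (i+1) = 0 := by
  have := pi_rel (K := K) (n := n) (Or.inr (Or.inr ⟨i, h, Or.inl rfl⟩))
  simpa [aB, bB, cB] using this

lemma rel_bca (i : ℕ) (h : i < n) : bB K n (i+1) * cB K n (i+1) * aB K n (i+1) = 0 := by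
  have := pi_rel (K := K) (n := n) (Or.inr (Or.inr ⟨i, h, Or.inr (Or.inl rfl)⟩))
  simpa [aB, bB, cB] using this

lemma rel_cc (i : ℕ) (h : i < n) : cB K n i * cB K n (i+1) = 0 := by
  have := pi_rel (K := K) (n := n) (Or.inr (Or.inr ⟨i, h, Or.inr (Or.inr (Or.inl rfl))⟩))
  simpa [aB, bB, cB] using this

lemma rel_ba (i : ℕ) (h : i < n) : bB K n (i+1) * aB K n i = 0 := by
  have := pi_rel (K := K) (n := n) (Or.inr (Or.inr ⟨i, h, Or.inr (Or.inr (Or.inr rfl))⟩))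
  simpa [aB, bB, cB] using this

lemma X_n (j : Fin (n+1)) (h : j.val = n) :
    X K (Gen.a j) * X K (Gen.b j) * X K (Gen.c j) = 0 := by
  obtain ⟨j, hj⟩ := j
  rw [← aB_eq, ← bB_eq, ← cB_eq]
  simp only at h
  subst h
  exact rel_n

lemma X_0 (j : Fin (n+1)) (h : j.val = 0) :
    X K (Gen.c j) * X K (Gen.a j) = 0 := by
  obtain ⟨j, hj⟩ := j
  rw [← aB_eq, ← cB_eq]
  simp only at h
  subst h
  exact_mod_cast rel_0 (K := K) (n := n)

lemma X_abc (j k : Fin (n+1)) (h : k.val = j.val + 1) :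
    X K (Gen.a j) * X K (Gen.b j) * X K (Gen.c j)
      + X K (Gen.c k) * X K (Gen.a k) * X K (Gen.b k) = 0 := by
  obtain ⟨j, hj⟩ := j
  obtain ⟨k, hk⟩ := k
  simp only at h
  subst h
  rw [← aB_eq, ← bB_eq, ← cB_eq, ← aB_eq, ← bB_eq, ← cB_eq]
  exact_mod_cast rel_abc j (by omega)

lemma X_bca (k : Fin (n+1)) (h : 0 < k.val) :
    X K (Gen.b k) * X K (Gen.c k) * X K (Gen.a k) = 0 := by
  obtain ⟨k, hk⟩ := k
  obtain ⟨j, rfl⟩ : ∃ j, k = j + 1 := ⟨k - 1, by simp only at h; omega⟩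
  rw [← aB_eq, ← bB_eq, ← cB_eq]
  exact_mod_cast rel_bca j (by omega)

lemma X_cc (j k : Fin (n+1)) (h : k.val = j.val + 1) :
    X K (Gen.c j) * X K (Gen.c k) = 0 := by
  obtain ⟨j, hj⟩ := j
  obtain ⟨k, hk⟩ := k
  simp only at h
  subst h
  rw [← cB_eq, ← cB_eq]
  exact_mod_cast rel_cc j (by omega)

lemma X_ba (j k : Fin (n+1)) (h : k.val = j.val + 1) :
    X K (Gen.b k) * X K (Gen.a j) = 0 := by
  obtain ⟨j, hj⟩ := j
  obtain ⟨k, hk⟩ := k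
  simp only at h
  subst h
  rw [← aB_eq, ← bB_eq]
  exact_mod_cast rel_ba j (by omega)

/-- words are stored with the last letter first; `Z x w`: the word `w x` ends with a monomial
relation. -/
def Z : Gen n → List (Gen n) → Prop
  | .a j, .c k :: w => j = k ∧ (j.val = 0 ∨ w.head? = some (.b j))
  | .a j, .b k :: _ => k.val = j.val + 1
  | .c j, .c k :: _ => j.val = k.val + 1
  | .c j, .b k :: .a l :: _ => j.val = n ∧ k = j ∧ l = j
  | _, _ => False

/-- the word `w x` ends with `c_j a_j b_j`, `j > 0` -/
def F : Gen n → List (Gen n) → Prop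
  | .b j, .a k :: .c l :: _ => 0 < j.val ∧ k = j ∧ l = j
  | _, _ => False

def Nm : List (Gen n) → Prop
  | [] => True
  | x :: w => Nm w ∧ ¬ Z x w ∧ ¬ F x w

lemma Nm_tail {x : Gen n} {w : List (Gen n)} (h : Nm (x :: w)) : Nm w := h.1

abbrev W (K : Type) [Field K] (n : ℕ) := {w : List (Gen n) // Nm w} →₀ K

open Classical in
noncomputable def sgl (K : Type) [Field K] {n : ℕ} (w : List (Gen n)) : W K n :=
  if h : Nm w then Finsupp.single ⟨w, h⟩ 1 else 0

def prd (j : Fin (n+1)) : Fin (n+1) := ⟨j.val - 1, by omega⟩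

def flp : Gen n → List (Gen n) → List (Gen n)
  | .b j, _ :: _ :: u => .c (prd j) :: .b (prd j) :: .a (prd j) :: u
  | _, _ => []

open Classical in
noncomputable def stp (K : Type) [Field K] {n : ℕ} (x : Gen n) (w : List (Gen n)) : W K n :=
  if F x w then - sgl K (flp x w) else sgl K (x :: w)

noncomputable def act (K : Type) [Field K] {n : ℕ} (x : Gen n) : W K n →ₗ[K] W K n :=
  Finsupp.linearCombination K (fun w => stp K x w.1)

lemma sgl_of {w : List (Gen n)} (h : Nm w) : sgl K w = Finsupp.single ⟨w, h⟩ 1 := dif_pos h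
lemma sgl_not {w : List (Gen n)} (h : ¬ Nm w) : sgl K w = 0 := dif_neg h

lemma act_sgl {x : Gen n} {w : List (Gen n)} (h : Nm w) : act K x (sgl K w) = stp K x w := by
  rw [sgl_of h, act, Finsupp.linearCombination_single, one_smul]

lemma act_a (j : Fin (n+1)) (w : List (Gen n)) :
    act K (.a j) (sgl K w) = sgl K (.a j :: w) := by
  by_cases h : Nm w
  · rw [act_sgl h, stp, if_neg (by simp [F])]
  · rw [sgl_not h, sgl_not (mt Nm_tail h), map_zero]

lemma act_c (j : Fin (n+1)) (w : List (Gen n)) :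
    act K (.c j) (sgl K w) = sgl K (.c j :: w) := by
  by_cases h : Nm w
  · rw [act_sgl h, stp, if_neg (by simp [F])]
  · rw [sgl_not h, sgl_not (mt Nm_tail h), map_zero]

lemma act_b (j : Fin (n+1)) (w : List (Gen n)) (hF : ¬ F (.b j) w) :
    act K (.b j) (sgl K w) = sgl K (.b j :: w) := by
  by_cases h : Nm w
  · rw [act_sgl h, stp, if_neg hF]
  · rw [sgl_not h, sgl_not (mt Nm_tail h), map_zero]

lemma act_bF (j : Fin (n+1)) (u : List (Gen n)) (hj : 0 < j.val)
    (h : Nm (.a j :: .c j :: u)) :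
    act K (.b j) (sgl K (.a j :: .c j :: u)) =
      - sgl K (.c (prd j) :: .b (prd j) :: .a (prd j) :: u) := by
  rw [act_sgl h, stp, if_pos (by simp [F, hj])]
  rfl

lemma act_norm {x : Gen n} {w : List (Gen n)} (h : Nm (x :: w)) :
    act K x (sgl K w) = sgl K (x :: w) := by
  rw [act_sgl h.1, stp, if_neg h.2.2]

/-! the relations hold for the action -/

lemma wext {f : W K n →ₗ[K] W K n} (h : ∀ w, Nm w → f (sgl K w) = 0) : f = 0 := by
  ext1 w
  ext1
  have := h w.1 w.2
  rw [sgl_of w.2] at this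
  simpa using this

lemma sgl_Z {x : Gen n} {w : List (Gen n)} (h : Z x w) : sgl K (x :: w) = 0 :=
  sgl_not (fun h' => h'.2.1 h)

lemma r_cc (j k : Fin (n+1)) (h : k.val = j.val + 1) (w : List (Gen n)) :
    act K (.c k) (act K (.c j) (sgl K w)) = 0 := by
  rw [act_c, act_c, sgl_Z]
  simp [Z, h]

lemma r_0 (j : Fin (n+1)) (h : j.val = 0) (w : List (Gen n)) :
    act K (.a j) (act K (.c j) (sgl K w)) = 0 := by
  rw [act_c, act_a, sgl_Z]
  simp [Z, h]

lemma Nm_flp {j : Fin (n+1)} {u : List (Gen n)} (hj : 0 < j.val)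
    (h : Nm (.a j :: .c j :: u)) :
    Nm (.c (prd j) :: .b (prd j) :: .a (prd j) :: u) := by
  obtain ⟨⟨h1, h2, h3⟩, h4, h5⟩ := h
  have hp : (prd j).val + 1 = j.val := by simp [prd]; omega
  have hjn : j.val < n + 1 := j.2
  refine ⟨⟨⟨h1, ?_, ?_⟩, ?_, ?_⟩, ?_, ?_⟩
  · rcases u with _ | ⟨x | x | x, u⟩ <;> simp [Z] at *
    · intro hx
      apply h4.2
      ext
      omega
    · intro hx
      subst hx
      omega
  · simp [F]
  · simp [Z]
  · rcases u with _ | ⟨x | x | x, u⟩ <;> simp [F] at *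
    · intro _ hx
      subst hx
      simp [Z] at h2
      omega
  · simp [Z]
    omega
  · simp [F]

lemma r_ba (j k : Fin (n+1)) (h : k.val = j.val + 1) (w : List (Gen n)) (hw : Nm w) :
    act K (.a j) (act K (.b k) (sgl K w)) = 0 := by
  by_cases hF : F (.b k) w
  · rcases w with _ | ⟨x | x | x, _ | ⟨y | y | y, u⟩⟩ <;> simp [F] at hF
    obtain ⟨h0, rfl, rfl⟩ := hF
    rw [act_bF _ _ h0 hw, map_neg, act_a, sgl_Z, neg_zero]
    have : prd y = j := by ext; simp [prd]; omega
    simp [Z, this]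
  · rw [act_b _ _ hF, act_a, sgl_Z]
    simp [Z, h]

lemma r_bca (k : Fin (n+1)) (h : 0 < k.val) (w : List (Gen n)) (hw : Nm w) :
    act K (.a k) (act K (.c k) (act K (.b k) (sgl K w))) = 0 := by
  by_cases hF : F (.b k) w
  · rcases w with _ | ⟨x | x | x, _ | ⟨y | y | y, u⟩⟩ <;> simp [F] at hF
    obtain ⟨h0, rfl, rfl⟩ := hF
    rw [act_bF _ _ h0 hw, map_neg, act_c, sgl_Z, neg_zero, map_zero]
    simp [Z, prd]; omega
  · rw [act_b _ _ hF, act_c, act_a, sgl_Z]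
    simp [Z]

lemma r_n (k : Fin (n+1)) (h : k.val = n) (w : List (Gen n)) (hw : Nm w) :
    act K (.c k) (act K (.b k) (act K (.a k) (sgl K w))) = 0 := by
  rw [act_a]
  by_cases hN : Nm (.a k :: w)
  swap
  · rw [sgl_not hN, map_zero, map_zero]
  by_cases hF : F (.b k) (.a k :: w)
  · rcases w with _ | ⟨x | x | x, w⟩ <;> simp [F] at hF
    obtain ⟨h0, rfl⟩ := hF
    rw [act_bF _ _ h0 hN, map_neg, act_c, sgl_Z, neg_zero]
    simp [Z, prd]; omega
  · rw [act_b _ _ hF, act_c, sgl_Z]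
    simp [Z, h]

lemma r_abc (j k : Fin (n+1)) (h : k.val = j.val + 1) (w : List (Gen n)) (hw : Nm w) :
    act K (.c j) (act K (.b j) (act K (.a j) (sgl K w))) +
      act K (.b k) (act K (.a k) (act K (.c k) (sgl K w))) = 0 := by
  have hp : prd k = j := by ext; simp [prd]; omega
  rw [act_c, act_a, act_a]
  by_cases h2 : Nm (.a k :: .c k :: w)
  · rw [act_bF _ _ (by omega) h2, hp]
    have := Nm_flp (by omega) h2
    rw [hp] at this
    rw [act_norm this.1, act_norm this]
    simp
  · rw [sgl_not h2, map_zero, add_zero]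
    by_cases hN : Nm (.a j :: w)
    swap
    · rw [sgl_not hN, map_zero, map_zero]
    by_cases hF : F (.b j) (.a j :: w)
    · rcases w with _ | ⟨x | x | x, w⟩ <;> simp [F] at hF
      obtain ⟨h0, rfl⟩ := hF
      rw [act_bF _ _ h0 hN, map_neg, act_c, sgl_Z, neg_zero]
      simp [Z, prd]; omega
    · exfalso
      apply h2
      have hkn : k.val < n + 1 := k.2
      refine ⟨⟨hw, ?_, by simp [F]⟩, ?_, by simp [F]⟩
      · rcases w with _ | ⟨x | x | x, _ | ⟨y | y | y, u⟩⟩ <;> simp [Z, F, Nm] at *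
        all_goals grind
      · rcases w with _ | ⟨x | x | x, w⟩ <;> simp [Z, F, Nm] at *
        all_goals grind

open MulOpposite in
noncomputable def rho0 (K : Type) [Field K] (n : ℕ) : FA K n →ₐ[K] (Module.End K (W K n))ᵐᵒᵖ :=
  FreeAlgebra.lift K (fun x => op (act K x))

lemma rho0_ι (x : Gen n) : rho0 K n (FreeAlgebra.ι K x) = MulOpposite.op (act K x) := by
  simp [rho0]

lemma rho0_rel {x : FA K n} (h : x ∈ rels K n) : rho0 K n x = 0 := by
  have ha : ∀ j : ℕ, ∀ h : j < n + 1, ga K n (j : ℤ) = FreeAlgebra.ι K (Gen.a ⟨j, h⟩) := by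
    intro j h
    unfold ga
    rw [dif_pos (by omega)]; simp
  have hb : ∀ j : ℕ, ∀ h : j < n + 1, gb K n (j : ℤ) = FreeAlgebra.ι K (Gen.b ⟨j, h⟩) := by
    intro j h
    unfold gb
    rw [dif_pos (by omega)]; simp
  have hc : ∀ j : ℕ, ∀ h : j < n + 1, gc K n (j : ℤ) = FreeAlgebra.ι K (Gen.c ⟨j, h⟩) := by
    intro j h
    unfold gc
    rw [dif_pos (by omega)]; simp
  have key : ∀ f : (Module.End K (W K n))ᵐᵒᵖ, (∀ w, Nm w → f.unop (sgl K w) = 0) → f = 0 := by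
    intro f hf
    apply MulOpposite.unop_injective
    exact wext hf
  rcases h with rfl | rfl | ⟨i, hi, rfl | rfl | rfl | rfl⟩
  · rw [ha _ (by omega), hb _ (by omega), hc _ (by omega)]
    refine key _ fun w hw => ?_
    simpa [rho0_ι] using r_n (K := K) ⟨n, by omega⟩ rfl w hw
  · have e : (0 : ℤ) = ((0 : ℕ) : ℤ) := rfl
    rw [e, ha _ (by omega), hc _ (by omega)]
    refine key _ fun w hw => ?_
    simpa [rho0_ι] using r_0 (K := K) ⟨0, by omega⟩ rfl w
  all_goals
    have e : (i : ℤ) + 1 = ((i + 1 : ℕ) : ℤ) := by push_cast; rfl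
    rw [e]
  · rw [ha i (by omega), hb i (by omega), hc i (by omega),
      ha (i+1) (by omega), hb (i+1) (by omega), hc (i+1) (by omega)]
    refine key _ fun w hw => ?_
    simpa [rho0_ι] using r_abc (K := K) ⟨i, by omega⟩ ⟨i+1, by omega⟩ rfl w hw
  · rw [ha (i+1) (by omega), hb (i+1) (by omega), hc (i+1) (by omega)]
    refine key _ fun w hw => ?_
    simpa [rho0_ι] using r_bca (K := K) ⟨i+1, by omega⟩ (by simp) w hw
  · rw [hc i (by omega), hc (i+1) (by omega)]
    refine key _ fun w hw => ?_
    simpa [rho0_ι] using r_cc (K := K) ⟨i, by omega⟩ ⟨i+1, by omega⟩ rfl w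
  · rw [ha i (by omega), hb (i+1) (by omega)]
    refine key _ fun w hw => ?_
    simpa [rho0_ι] using r_ba (K := K) ⟨i, by omega⟩ ⟨i+1, by omega⟩ rfl w hw

noncomputable def rho (K : Type) [Field K] (n : ℕ) : B K n →ₐ[K] (Module.End K (W K n))ᵐᵒᵖ :=
  RingQuot.liftAlgHom K ⟨rho0 K n, by
    rintro x y ⟨hx, rfl⟩
    rw [rho0_rel hx, map_zero]⟩

lemma rho_X (x : Gen n) : (rho K n (X K x)).unop = act K x := by
  simp [rho, X, πB, rho0_ι]

noncomputable def word (K : Type) [Field K] {n : ℕ} : List (Gen n) → B K n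
  | [] => 1
  | x :: w => word K w * X K x

lemma word_append (u v : List (Gen n)) : word K (u ++ v) = word K v * word K u := by
  induction u with
  | nil => simp [word]
  | cons x u ih => simp [word, ih, mul_assoc]

noncomputable def psi (K : Type) [Field K] (n : ℕ) : W K n →ₗ[K] B K n :=
  Finsupp.linearCombination K (fun w => word K w.1)

lemma psi_sgl {w : List (Gen n)} (h : Nm w) : psi K n (sgl K w) = word K w := by
  rw [sgl_of h, psi, Finsupp.linearCombination_single, one_smul]

lemma word_Z {x : Gen n} {w : List (Gen n)} (h : Z x w) : word K w * X K x = 0 := by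
  rcases x with j | j | j
  · rcases w with _ | ⟨x | x | x, w⟩ <;> simp [Z] at h
    · simp [word, mul_assoc, X_ba j x h]
    · obtain ⟨rfl, h⟩ := h
      by_cases h0 : j.val = 0
      · simp [word, mul_assoc, X_0 j h0]
      · rcases h with h | h
        · exact absurd (by simp [h]) h0
        rcases w with _ | ⟨y, w⟩ <;> simp at h
        subst h
        have := X_bca (K := K) j (by omega)
        simp only [word, mul_assoc] at this ⊢
        rw [this, mul_zero]
  · simp [Z] at h
  · rcases w with _ | ⟨x | x | x, w⟩
    · simp [Z] at h
    · simp [Z] at h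
    · rcases w with _ | ⟨y | y | y, w⟩ <;> simp [Z] at h
      obtain ⟨h0, rfl, rfl⟩ := h
      have := X_n (K := K) _ h0
      simp only [word, mul_assoc] at this ⊢
      rw [this, mul_zero]
    · simp only [Z] at h
      simp [word, mul_assoc, X_cc x j h]

lemma psi_act (x : Gen n) (f : W K n) : psi K n (act K x f) = psi K n f * X K x := by
  induction f using Finsupp.induction_linear with
  | zero => simp
  | add f g hf hg => simp [hf, hg, add_mul]
  | single w c =>
    have e : Finsupp.single w c = c • sgl K w.1 := by
      rw [sgl_of w.2]; simp
    rw [e, map_smul, map_smul, map_smul, smul_mul_assoc]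
    congr 1
    obtain ⟨w, hw⟩ := w
    simp only
    rw [psi_sgl hw, act_sgl hw, stp]
    by_cases hF : F x w
    · rw [if_pos hF]
      rcases x with k | k | k <;> simp [F] at hF
      rcases w with _ | ⟨x | x | x, _ | ⟨y | y | y, u⟩⟩ <;> simp [F] at hF
      obtain ⟨h0, rfl, rfl⟩ := hF
      have := X_abc (K := K) (prd y) y (by simp [prd]; omega)
      rw [map_neg]
      simp only [flp]
      rw [psi_sgl (Nm_flp h0 hw)]
      simp only [word]
      rw [neg_eq_iff_add_eq_zero]
      simp only [mul_assoc, ← mul_add] at this ⊢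
      rw [this, mul_zero]
    · rw [if_neg hF]
      by_cases hZ : Z x w
      · rw [sgl_Z hZ, map_zero, word_Z hZ]
      · rw [psi_sgl (show Nm (x :: w) from ⟨hw, hZ, hF⟩), word]

lemma psi_rho (y : B K n) (f : W K n) : psi K n ((rho K n y).unop f) = psi K n f * y := by
  obtain ⟨z, rfl⟩ : ∃ z, πB K n z = y := RingQuot.mkAlgHom_surjective K (BRel K n) y
  induction z using FreeAlgebra.induction generalizing f with
  | grade0 r =>
    simp [Algebra.algebraMap_eq_smul_one]
  | grade1 x =>
    have := rho_X (K := K) x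
    unfold X at this
    rw [this, psi_act]
    rfl
  | mul a b ha hb => simp [ha, hb, mul_assoc]
  | add a b ha hb => simp [ha, hb, mul_add]

noncomputable def phi (K : Type) [Field K] (n : ℕ) (y : B K n) : W K n :=
  (rho K n y).unop (sgl K [])

lemma psi_phi (y : B K n) : psi K n (phi K n y) = y := by
  rw [phi, psi_rho, psi_sgl (show Nm [] from trivial), word, one_mul]

lemma phi_mul_X (y : B K n) (x : Gen n) : phi K n (y * X K x) = act K x (phi K n y) := by
  simp [phi, ← rho_X]

lemma phi_word {w : List (Gen n)} (h : Nm w) : phi K n (word K w) = sgl K w := by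
  induction w with
  | nil => simp [phi, word]
  | cons x w ih => rw [word, phi_mul_X, ih h.1, act_norm h]

lemma phi_add (x y : B K n) : phi K n (x + y) = phi K n x + phi K n y := by simp [phi]
lemma phi_zero : phi K n 0 = 0 := by simp [phi]
lemma phi_smul (c : K) (y : B K n) : phi K n (c • y) = c • phi K n y := by simp [phi]

lemma sgl_apply {w v : List (Gen n)} (hw : Nm w) (hv : Nm v) (h : w ≠ v) :
    sgl K w ⟨v, hv⟩ = 0 := by
  classical
  rw [sgl_of hw, Finsupp.single_apply, if_neg]
  simpa using h

lemma sgl_self {w : List (Gen n)} (hw : Nm w) : sgl K w ⟨w, hw⟩ = 1 := by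
  rw [sgl_of hw, Finsupp.single_eq_same]

lemma single_eq (w : {w : List (Gen n) // Nm w}) (c : K) :
    Finsupp.single w c = c • sgl K w.1 := by
  rw [sgl_of w.2]; simp

lemma act_c_coeff (j : Fin (n+1)) (w : List (Gen n)) (hw : Nm (.c j :: w)) (f : W K n) :
    act K (.c j) f ⟨.c j :: w, hw⟩ = f ⟨w, hw.1⟩ := by
  induction f using Finsupp.induction_linear with
  | zero => simp
  | add f g hf hg => simp [hf, hg]
  | single v c =>
    obtain ⟨v, hv⟩ := v
    rw [single_eq, map_smul, act_c]
    simp only [Finsupp.smul_apply]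
    congr 1
    by_cases h : v = w
    · subst h
      rw [sgl_self, sgl_self]
    · rw [sgl_apply hv _ h]
      by_cases hN : Nm (.c j :: v)
      · rw [sgl_apply hN]
        simpa using h
      · rw [sgl_not hN]; rfl

/-- left annihilator of `c_k` -/
lemma lann_c (j k : Fin (n+1)) (h : k.val = j.val + 1) (hk : k.val < n) (y : B K n)
    (hy : y * X K (.c k) = 0) : ∃ t, y = t * X K (.c j) := by
  have h1 : act K (.c k) (phi K n y) = 0 := by rw [← phi_mul_X, hy, phi_zero]
  suffices y ∈ Ideal.span {X K (.c j)} by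
    obtain ⟨t, ht⟩ := Submodule.mem_span_singleton.1 this
    exact ⟨t, ht.symm⟩
  rw [← psi_phi y, psi, Finsupp.linearCombination_apply, Finsupp.sum]
  refine Submodule.sum_mem _ fun w hw => ?_
  obtain ⟨w, hwN⟩ := w
  rw [Algebra.smul_def]
  refine Ideal.mul_mem_left _ _ ?_
  by_cases hN : Nm (.c k :: w)
  · exfalso
    have := act_c_coeff k w hN (phi K n y)
    rw [h1] at this
    exact (Finsupp.mem_support_iff.1 hw) this.symm
  · have hZ : Z (.c k) w := by
      by_contra hZ
      exact hN ⟨hwN, hZ, by simp [F]⟩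
    rcases w with _ | ⟨x | x | x, w⟩
    · simp [Z] at hZ
    · simp [Z] at hZ
    · rcases w with _ | ⟨y | y | y, w⟩ <;> simp [Z] at hZ
      omega
    · simp only [Z] at hZ
      have : x = j := by ext; omega
      subst this
      exact Ideal.mul_mem_left _ _ (Ideal.subset_span rfl)

/-- words `w` with `a_i b_i w = 0` -/
def Bad (i : Fin (n+1)) (w : List (Gen n)) : Prop :=
  (∃ u j, i.val = j.val + 1 ∧ w = u ++ [.a j]) ∨ (∃ u, w = u ++ [.a i, .c i]) ∨
    (i.val = n ∧ ∃ u, w = u ++ [.c i])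

lemma Bad.cons {i : Fin (n+1)} {w : List (Gen n)} (x : Gen n) (h : Bad i w) : Bad i (x :: w) := by
  rcases h with ⟨u, j, h, rfl⟩ | ⟨u, rfl⟩ | ⟨h, u, rfl⟩
  · exact Or.inl ⟨x :: u, j, h, rfl⟩
  · exact Or.inr (Or.inl ⟨x :: u, rfl⟩)
  · exact Or.inr (Or.inr ⟨h, x :: u, rfl⟩)

lemma Nm_append {i : Fin (n+1)} {w : List (Gen n)} (h : ¬ Bad i w) (hw : Nm w) :
    Nm (w ++ [.b i, .a i]) := by
  induction w with
  | nil => simp [Nm, Z, F]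
  | cons x t ih =>
    refine ⟨ih (fun h' => h (h'.cons x)) hw.1, ?_, ?_⟩
    · intro hZ
      rcases t with _ | ⟨y, _ | ⟨z, s⟩⟩
      · apply h
        rcases x with x | x | x <;> simp [Z] at hZ
        · exact Or.inl ⟨[], x, hZ, rfl⟩
        · obtain ⟨h1, rfl⟩ := hZ
          exact Or.inr (Or.inr ⟨h1, [], rfl⟩)
      · by_cases hZ' : Z x [y]
        · exact hw.2.1 hZ'
        apply h
        rcases x with x | x | x <;> rcases y with y | y | y <;> simp [Z] at hZ hZ'
        · exact absurd hZ hZ'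
        · obtain ⟨rfl, h1⟩ := hZ
          have : i = x := by
            rcases h1 with h1 | h1
            · exact absurd h1 (hZ' rfl)
            · exact h1
          subst this
          exact Or.inr (Or.inl ⟨[], rfl⟩)
        · exact absurd hZ hZ'
      · apply hw.2.1
        rcases x with x | x | x <;> rcases y with y | y | y <;> rcases z with z | z | z <;>
          simpa [Z] using hZ
    · intro hF
      rcases t with _ | ⟨y, _ | ⟨z, s⟩⟩
      · rcases x with x | x | x <;> simp [F] at hF
      · rcases x with x | x | x <;> rcases y with y | y | y <;> simp [F] at hF
      · apply hw.2.2
        rcases x with x | x | x <;> rcases y with y | y | y <;> rcases z with z | z | z <;>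
          simpa [F] using hF

lemma Bad_zero {i : Fin (n+1)} {w : List (Gen n)} (hi : 0 < i.val) (h : Bad i w) :
    X K (.a i) * X K (.b i) * word K w = 0 := by
  rcases h with ⟨u, j, h, rfl⟩ | ⟨u, rfl⟩ | ⟨h, u, rfl⟩
  · rw [word_append]
    simp only [word, one_mul, mul_assoc]
    rw [← mul_assoc (X K (.b i)), X_ba j i h, zero_mul, mul_zero]
  · rw [word_append]
    have := X_bca (K := K) i hi
    simp only [word, one_mul]
    rw [show X K (Gen.a i) * X K (Gen.b i) * (X K (Gen.c i) * X K (Gen.a i) * word K u)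
      = X K (Gen.a i) * (X K (Gen.b i) * X K (Gen.c i) * X K (Gen.a i)) * word K u by
        simp only [mul_assoc], this, mul_zero, zero_mul]
  · rw [word_append]
    simp only [word, one_mul]
    rw [← mul_assoc, X_n i h, zero_mul]

lemma Bad_zero' {i j : Fin (n+1)} {w : List (Gen n)} (hj : 0 < j.val) (hij : i.val = j.val + 1)
    (h : Bad i w) : X K (.b j) * X K (.c j) * word K w = 0 := by
  rcases h with ⟨u, l, h, rfl⟩ | ⟨u, rfl⟩ | ⟨h, u, rfl⟩
  · have : l = j := by ext; omega
    subst this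
    rw [word_append]
    simp only [word, one_mul]
    rw [← mul_assoc, X_bca l hj, zero_mul]
  · rw [word_append]
    simp only [word, one_mul, mul_assoc]
    rw [← mul_assoc (X K (.c j)), X_cc j i hij, zero_mul, mul_zero]
  · rw [word_append]
    simp only [word, one_mul, mul_assoc]
    rw [← mul_assoc (X K (.c j)), X_cc j i hij, zero_mul, mul_zero]

lemma L_coeff (i : Fin (n+1)) (hi : 0 < i.val) (w : List (Gen n)) (hw : Nm w) (hb : ¬ Bad i w)
    (f : W K n) :
    phi K n (X K (.a i) * X K (.b i) * psi K n f) ⟨w ++ [.b i, .a i], Nm_append hb hw⟩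
      = f ⟨w, hw⟩ := by
  induction f using Finsupp.induction_linear with
  | zero => simp [phi_zero]
  | add f g hf hg => simp only [map_add, mul_add, phi_add, Finsupp.add_apply, hf, hg]
  | single v c =>
    obtain ⟨v, hv⟩ := v
    rw [single_eq, map_smul, mul_smul_comm, phi_smul]
    simp only [Finsupp.smul_apply]
    congr 1
    rw [psi_sgl hv]
    by_cases hbv : Bad i v
    · rw [Bad_zero hi hbv, phi_zero, sgl_apply hv]
      · rfl
      · rintro rfl
        exact hb hbv
    · have e : X K (.a i) * X K (.b i) * word K v = word K (v ++ [.b i, .a i]) := by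
        rw [word_append]; simp [word]
      rw [e, phi_word (Nm_append hbv hv)]
      by_cases h : v = w
      · subst h
        rw [sgl_self, sgl_self]
      · rw [sgl_apply hv _ h, sgl_apply]
        · exact Nm_append hbv hv
        · simpa using h

lemma rann_ab (i j : Fin (n+1)) (hj : 0 < j.val) (hij : i.val = j.val + 1) (m : B K n)
    (hm : X K (.a i) * X K (.b i) * m = 0) : X K (.b j) * X K (.c j) * m = 0 := by
  have h1 : ∀ w (hw : Nm w), ¬ Bad i w → phi K n m ⟨w, hw⟩ = 0 := by
    intro w hw hb
    rw [← L_coeff i (by omega) w hw hb, psi_phi, hm, phi_zero]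
    rfl
  rw [← psi_phi m, psi, Finsupp.linearCombination_apply, Finsupp.sum, Finset.mul_sum]
  refine Finset.sum_eq_zero fun w hw => ?_
  rw [mul_smul_comm, Bad_zero' hj hij, smul_zero]
  by_contra hb
  exact Finsupp.mem_support_iff.1 hw (h1 w.1 w.2 hb)

open Classical in
noncomputable def chi0 (K : Type) [Field K] {n : ℕ} (j : Fin (n+1)) : FA K n →ₐ[K] K :=
  FreeAlgebra.lift K (fun x => if x = .b j ∨ x = .c j then 1 else 0)

lemma chi0_a (j : Fin (n+1)) (i : ℤ) : chi0 K j (ga K n i) = 0 := by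
  unfold ga
  split_ifs <;> simp [chi0]

lemma chi0_cc (j : Fin (n+1)) (i : ℤ) : chi0 K j (gc K n i) * chi0 K j (gc K n (i+1)) = 0 := by
  unfold gc
  split_ifs <;> simp [chi0]
  rintro rfl h
  simp only [Fin.mk.injEq] at h
  omega

noncomputable def chi (K : Type) [Field K] {n : ℕ} (j : Fin (n+1)) : B K n →ₐ[K] K :=
  RingQuot.liftAlgHom K ⟨chi0 K j, by
    rintro x y ⟨hx, rfl⟩
    rw [map_zero]
    rcases hx with rfl | rfl | ⟨i, hi, rfl | rfl | rfl | rfl⟩ <;> simp [chi0_a]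
    have := chi0_cc (K := K) j i
    simpa using this⟩

lemma chi_X (j : Fin (n+1)) (x : Gen n) :
    chi K j (X K x) = chi0 K j (FreeAlgebra.ι K x) := by
  simp [chi, X, πB]

lemma bc_not (i j : Fin (n+1)) (y : B K n) :
    X K (.b j) * X K (.c j) ≠ y * (X K (.a i) * X K (.b i)) := by
  intro h
  have := congrArg (chi K j) h
  simp [chi_X, chi0] at this


section star
variable {R : Type} [Ring R]

lemma star_cast {a b : ℕ} (M : Matrix (Fin (a+1)) (Fin b) R) (G : Matrix (Fin 2) (Fin 1) R)
    (v : Fin (a+2) → R) (j : Fin b) :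
    Matrix.vecMul v (starM M G : Matrix (Fin (a+2)) (Fin (b+1)) R) (Fin.castSucc j)
      = Matrix.vecMul (fun k => v (Fin.castSucc k)) M j := by
  simp only [Matrix.vecMul, dotProduct]
  rw [Fin.sum_univ_castSucc]
  have h1 : ∀ k : Fin (a+1), (starM M G : Matrix (Fin (a+2)) (Fin (b+1)) R) k.castSucc j.castSucc
      = M k j := by
    intro k
    have := k.2
    have := j.2
    simp [starM]
    intro h
    omega
  have h2 : (starM M G : Matrix (Fin (a+2)) (Fin (b+1)) R) (Fin.last _) j.castSucc = 0 := by
    have := j.2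
    simp [starM]
  rw [h2, mul_zero, add_zero]
  exact Finset.sum_congr rfl fun k _ => by rw [h1]

lemma star_last {a b : ℕ} (M : Matrix (Fin (a+1)) (Fin b) R) (G : Matrix (Fin 2) (Fin 1) R)
    (v : Fin (a+2) → R) :
    Matrix.vecMul v (starM M G : Matrix (Fin (a+2)) (Fin (b+1)) R) (Fin.last b)
      = v (Fin.castSucc (Fin.last a)) * G 0 0 + v (Fin.last (a+1)) * G 1 0 := by
  simp only [Matrix.vecMul, dotProduct]
  rw [Fin.sum_univ_castSucc, Fin.sum_univ_castSucc]
  have h1 : ∀ k : Fin a, (starM M G : Matrix (Fin (a+2)) (Fin (b+1)) R) k.castSucc.castSucc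
      (Fin.last b) = 0 := by
    intro k
    have := k.2
    simp [starM]
  have h2 : (starM M G : Matrix (Fin (a+2)) (Fin (b+1)) R) (Fin.castSucc (Fin.last a))
      (Fin.last b) = G 0 0 := by
    simp [starM]
  have h3 : (starM M G : Matrix (Fin (a+2)) (Fin (b+1)) R) (Fin.last (a+1))
      (Fin.last b) = G 1 0 := by
    simp [starM]
  rw [h2, h3, Finset.sum_eq_zero fun k _ => by rw [h1, mul_zero], zero_add]

lemma core {r s t : ℕ} (M : Matrix (Fin (s+1)) (Fin r) R) (N : Matrix (Fin (t+1)) (Fin s) R)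
    (G1 G2 G3 : Matrix (Fin 2) (Fin 1) R)
    (H1 : G1 0 0 * G2 0 0 = 0) (H2 : G1 1 0 * G2 0 0 + G3 0 0 * G2 1 0 = 0)
    (H3 : G3 1 0 * G2 1 0 = 0) (H4 : ∀ y, y * G2 1 0 = 0 → ∃ z, y = z * G3 1 0)
    (hexact : ∀ v : Fin (s + 1) → R, Matrix.vecMul v M = 0 ↔
      ∃ u : Fin (t + 2) → R,
        v = Matrix.vecMul u (starM N G1 : Matrix (Fin (t+2)) (Fin (s+1)) R))
    (v : Fin (s + 2) → R) :
    Matrix.vecMul v (starM M G2 : Matrix (Fin (s+2)) (Fin (r+1)) R) = 0 ↔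
      ∃ u : Fin (t + 3) → R, v = Matrix.vecMul u
        (starM (a := t + 2) (starM N G1 : Matrix (Fin (t+2)) (Fin (s+1)) R) G3 :
          Matrix (Fin (t+3)) (Fin (s+2)) R) := by
  constructor
  · intro h
    have hM : Matrix.vecMul (fun k => v (Fin.castSucc k)) M = 0 := by
      ext j
      rw [← star_cast M G2, h]
      rfl
    obtain ⟨u, hu⟩ := (hexact _).1 hM
    have hl := star_last M G2 v
    have hx := congrFun hu (Fin.last s)
    rw [star_last] at hx
    rw [h, hx, Pi.zero_apply] at hl
    set p := u (Fin.castSucc (Fin.last t))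
    set q := u (Fin.last (t+1))
    set y := v (Fin.last (s+1))
    have : (y - q * G3 0 0) * G2 1 0 = 0 := by
      have e : (y - q * G3 0 0) * G2 1 0 = ((p * G1 0 0 + q * G1 1 0) * G2 0 0 + y * G2 1 0)
        - p * (G1 0 0 * G2 0 0) - q * (G1 1 0 * G2 0 0 + G3 0 0 * G2 1 0) := by noncomm_ring
      rw [e, ← hl, H1, H2]
      simp
    obtain ⟨z, hz⟩ := H4 _ this
    refine ⟨Fin.snoc (α := fun _ => R) u z, ?_⟩
    ext j
    refine Fin.lastCases ?_ (fun j => ?_) j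
    · rw [star_last (a := t+1)]
      simp only [Fin.snoc_castSucc, Fin.snoc_last]
      rw [← hz]
      simp [q, y]
    · rw [star_cast (a := t+1)]
      simp only [Fin.snoc_castSucc]
      exact congrFun hu j
  · rintro ⟨u, rfl⟩
    have hcast : (fun k : Fin (s+1) => Matrix.vecMul u
        (starM (a := t + 2) (starM N G1 : Matrix (Fin (t+2)) (Fin (s+1)) R) G3 :
          Matrix (Fin (t+3)) (Fin (s+2)) R) (Fin.castSucc k)) =
        Matrix.vecMul (fun k => u (Fin.castSucc k))
          (starM N G1 : Matrix (Fin (t+2)) (Fin (s+1)) R) := by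
      ext k
      rw [star_cast (a := t+1)]
    ext j
    refine Fin.lastCases ?_ (fun j => ?_) j
    · rw [star_last, star_last (a := t+1), star_cast (a := t+1), star_last]
      set p := u (Fin.castSucc (Fin.castSucc (Fin.last t)))
      set q := u (Fin.castSucc (Fin.last (t+1)))
      set z := u (Fin.last (t+1+1))
      have e : (p * G1 0 0 + q * G1 1 0) * G2 0 0 + (q * G3 0 0 + z * G3 1 0) * G2 1 0
        = p * (G1 0 0 * G2 0 0) + q * (G1 1 0 * G2 0 0 + G3 0 0 * G2 1 0)
          + z * (G3 1 0 * G2 1 0) := by noncomm_ring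
      rw [e, H1, H2, H3]
      simp
    · rw [star_cast, hcast, (hexact _).2 ⟨_, rfl⟩]
      rfl

/-- the degenerate star product with a matrix without rows -/
lemma star_nil_last {b : ℕ} (N : Matrix (Fin 0) (Fin b) R) (G : Matrix (Fin 2) (Fin 1) R)
    (u : Fin 1 → R) :
    Matrix.vecMul u (starM N G : Matrix (Fin 1) (Fin (b+1)) R) (Fin.last b)
      = u 0 * G 0 0 := by
  simp [Matrix.vecMul, dotProduct, starM]

lemma star_nil_cast {b : ℕ} (N : Matrix (Fin 0) (Fin b) R) (G : Matrix (Fin 2) (Fin 1) R)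
    (u : Fin 1 → R) (j : Fin b) :
    Matrix.vecMul u (starM N G : Matrix (Fin 1) (Fin (b+1)) R) (Fin.castSucc j) = 0 := by
  have := j.2
  simp [Matrix.vecMul, dotProduct, starM]

lemma vecMul_single_last {s r : ℕ} (M : Matrix (Fin (s+1)) (Fin r) R) (z : R) (j : Fin r) :
    Matrix.vecMul (Fin.snoc (α := fun _ => R) (fun _ : Fin s => (0:R)) z) M j
      = z * M (Fin.last s) j := by
  simp [Matrix.vecMul, dotProduct, Fin.sum_univ_castSucc]

end star

end S12


/-- Lemma 3.5(3)/(4)-type induction step.  Here the positive integers are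
`r₁`, `r₂ = s₂ + 1` and `r₃ = s₃ + 1`, so that `M` is an `r₂×r₁` matrix and `N` an
`(r₃−1)×(r₂−1)` matrix.  If `B^{r₃} → B^{r₂} → B^{r₁}` with maps right multiplication by
`N ⋆ Γ_i` and `M` is exact at `B^{r₂}`, then `B^{r₃+1} → B^{r₂+1} → B^{r₁+1}` with maps
right multiplication by `N ⋆ Γ_i ⋆ Γ_{i−2}` and `M ⋆ Γ_{i−1}` is exact at `B^{r₂+1}`. -/
theorem stmt_12 (K : Type) [Field K] (n : ℕ) (i : ℕ) (hi2 : 2 < i) (hin : i ≤ n)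
    (r₁ s₂ s₃ : ℕ) (hr₁ : 0 < r₁)
    (M : Matrix (Fin (s₂ + 1)) (Fin r₁) (B K n))
    (N : Matrix (Fin s₃) (Fin s₂) (B K n))
    (hexact : ∀ v : Fin (s₂ + 1) → B K n,
      Matrix.vecMul v M = 0 ↔
      ∃ u : Fin (s₃ + 1) → B K n, v = Matrix.vecMul u (starM N (GammaP K n i))) :
    ∀ v : Fin (s₂ + 2) → B K n,
      Matrix.vecMul v (starM M (GammaP K n ((i : ℤ) - 1))) = 0 ↔
      ∃ u : Fin (s₃ + 2) → B K n,
        v = Matrix.vecMul u (starM (starM N (GammaP K n i)) (GammaP K n ((i : ℤ) - 2))) := by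
  obtain ⟨k, rfl⟩ : ∃ k, i = k + 3 := ⟨i - 3, by omega⟩
  have e1 : (((k + 3 : ℕ) : ℤ) - 1) = ((k + 2 : ℕ) : ℤ) := by push_cast; ring
  have e2 : (((k + 3 : ℕ) : ℤ) - 2) = ((k + 1 : ℕ) : ℤ) := by push_cast; ring
  have e3 : (((k + 2 : ℕ) : ℤ) - 1) = ((k + 1 : ℕ) : ℤ) := by push_cast; ring
  have e4 : (((k + 1 : ℕ) : ℤ) - 1) = ((k : ℕ) : ℤ) := by push_cast; ring
  rcases s₃ with _ | t
  · exfalso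
    have hG : (GammaP K n ((k + 3 : ℕ) : ℤ)) 0 0 =
        S12.X K (.a ⟨k + 3, by omega⟩) * S12.X K (.b ⟨k + 3, by omega⟩) := by
      rw [← S12.aB_eq, ← S12.bB_eq]
      simp [GammaP]
    have h1 : ∀ j, S12.X K (.a ⟨k + 3, by omega⟩) * S12.X K (.b ⟨k + 3, by omega⟩)
        * M (Fin.last s₂) j = 0 := by
      intro j
      rw [← S12.vecMul_single_last, (hexact _).2]
      · rfl
      · refine ⟨fun _ => 1, ?_⟩
        ext l
        refine Fin.lastCases ?_ (fun l => ?_) l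
        · rw [S12.star_nil_last, hG, Fin.snoc_last, one_mul]
        · rw [S12.star_nil_cast, Fin.snoc_castSucc]
    obtain ⟨u, hu⟩ := (hexact (Fin.snoc (α := fun _ => B K n) (fun _ => 0)
      (S12.X K (.b ⟨k + 2, by omega⟩) * S12.X K (.c ⟨k + 2, by omega⟩)))).1 (by
        ext j
        rw [S12.vecMul_single_last]
        exact S12.rann_ab ⟨k + 3, by omega⟩ ⟨k + 2, by omega⟩ (by simp) rfl _ (h1 j))
    have := congrFun hu (Fin.last s₂)
    rw [S12.star_nil_last, hG, Fin.snoc_last] at this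
    exact S12.bc_not _ _ _ this
  · rw [e1, e2]
    refine S12.core M N _ _ _ ?_ ?_ ?_ ?_ hexact
    · simp only [GammaP, Matrix.of_apply, Matrix.cons_val_zero, Matrix.cons_val_one]
      rw [S12.aB_eq (k+3) (by omega), S12.bB_eq (k+3) (by omega), S12.aB_eq (k+2) (by omega),
        S12.bB_eq (k+2) (by omega), mul_assoc, ← mul_assoc (S12.X K (.b _)), S12.X_ba _ _ rfl,
        zero_mul, mul_zero]
    · simp only [GammaP, Matrix.of_apply, Matrix.cons_val_zero, Matrix.cons_val_one, e1, e3, e4]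
      rw [S12.aB_eq (k+2) (by omega), S12.bB_eq (k+2) (by omega), S12.cB_eq (k+2) (by omega),
        S12.aB_eq (k+1) (by omega), S12.bB_eq (k+1) (by omega), S12.cB_eq (k+1) (by omega),
        add_comm, ← mul_assoc (S12.X K (.c _))]
      exact S12.X_abc _ _ rfl
    · simp only [GammaP, Matrix.of_apply, Matrix.cons_val_zero, Matrix.cons_val_one, e1, e3, e4]
      rw [S12.cB_eq (k+1) (by omega), S12.cB_eq k (by omega)]
      exact S12.X_cc _ _ rfl
    · simp only [GammaP, Matrix.of_apply, Matrix.cons_val_zero, Matrix.cons_val_one, e1, e3, e4]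
      rw [S12.cB_eq (k+1) (by omega), S12.cB_eq k (by omega)]
      exact fun y hy => S12.lann_c _ _ rfl (by simp only; omega) y hy
end

section
/- For 0 ≤ p ≤ n with n ≡ p (mod 2), set R_p = Γ_n ⋆ Γ_{n−2} ⋆ Γ_{n−4} ⋆ ⋯ ⋆ Γ_p and U_{p−1} = (c_n) ⋆ Γ_{n−1} ⋆ Γ_{n−3} ⋆ ⋯ ⋆ Γ_{p−1}. Then the eventually periodic complex of finitely generated free left B-modules ⋯ → F₃ → F₂ → F₁ = B → B c_n → 0, whose augmentation is z ↦ z c_n and whose differentials, reading from the augmentation leftward, are right multiplication successively by R_n, U_{n−1}, R_{n−2}, U_{n−3}, …, and which thereafter continues 2-periodically with the pair (U_1, R_0) repeated when n is even and with the pair (R_1, U_0) repeated when n is odd (the ranks of the free modules F_j being dictated by the sizes of these matrices), is exact; i.e., it is a free resolution of the left ideal B c_n of B. -/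
/-- A matrix over `R` bundled with its dimensions. -/
structure MatB (R : Type) [Semiring R] where
  rows : ℕ
  cols : ℕ
  M : Matrix (Fin rows) (Fin cols) R

/-- Star product of bundled matrices. -/
def MatB.star {R : Type} [Semiring R] (P Q : MatB R) : MatB R :=
  ⟨P.rows + Q.rows - 1, P.cols + Q.cols, starM P.M Q.M⟩

/-- The bundled matrix `Γ_i` (this is `Γ_0 = (a_0 b_0)` when `i = 0`, and the `2×1` column
with entries `a_i b_i`, `c_{i-1}` when `i ≥ 1`). -/
def GammaMat (K : Type) [Field K] (n : ℕ) (i : ℤ) : MatB (B K n) :=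
  if i = 0 then ⟨1, 1, !![aB K n 0 * bB K n 0]⟩
  else ⟨2, 1, GammaP K n i⟩

/-- `P ⋆ Γ_i`, with the convention that `P ⋆ Γ_i = P` for `i < 0`. -/
def starGamma (K : Type) [Field K] (n : ℕ) (P : MatB (B K n)) (i : ℤ) : MatB (B K n) :=
  if i < 0 then P else P.star (GammaMat K n i)

/-- `R_p = Γ_n ⋆ Γ_{n−2} ⋆ ⋯ ⋆ Γ_p` (for `0 ≤ p ≤ n` with `n ≡ p (mod 2)`). -/
def Rmat (K : Type) [Field K] (n : ℕ) (p : ℕ) : MatB (B K n) :=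
  (((List.range ((n - p) / 2)).map fun t => (n : ℤ) - 2 * (t + 1))).foldl
    (starGamma K n) (GammaMat K n n)

/-- `U_{p−1} = (c_n) ⋆ Γ_{n−1} ⋆ Γ_{n−3} ⋆ ⋯ ⋆ Γ_{p−1}` (this def takes `p` as argument). -/
def Umat (K : Type) [Field K] (n : ℕ) (p : ℕ) : MatB (B K n) :=
  (((List.range ((n - p) / 2 + 1)).map fun t => (n : ℤ) - 1 - 2 * t)).foldl
    (starGamma K n) ⟨1, 1, !![cB K n n]⟩

/-- The sequence of differentials of the complex of Lemma 3.6 resolving `B c_n`: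
`DC j` is the `(j+1)`-st differential (so `DC 0 : F₂ → F₁`), namely right multiplication
successively by `R_n, U_{n−1}, R_{n−2}, U_{n−3}, …`, continuing `2`-periodically with the
pair `(U_1, R_0)` when `n` is even and `(R_1, U_0)` when `n` is odd. -/
def DC (K : Type) [Field K] (n : ℕ) (j : ℕ) : MatB (B K n) :=
  if j ≤ n then (if j % 2 = 0 then Rmat K n (n - j) else Umat K n (n - j + 1))
  else (if j % 2 = 0 then Rmat K n (n % 2) else Umat K n (2 - n % 2))

section Alg
variable (K : Type) [Field K] (n : ℕ)

theorem ga_in (i : ℕ) (h : i < n + 1) : ga K n (i : ℤ) = FreeAlgebra.ι K (Gen.a ⟨i, h⟩) := by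
  rw [ga, dif_pos (by omega)]; rfl
theorem gb_in (i : ℕ) (h : i < n + 1) : gb K n (i : ℤ) = FreeAlgebra.ι K (Gen.b ⟨i, h⟩) := by
  rw [gb, dif_pos (by omega)]; rfl
theorem gc_in (i : ℕ) (h : i < n + 1) : gc K n (i : ℤ) = FreeAlgebra.ι K (Gen.c ⟨i, h⟩) := by
  rw [gc, dif_pos (by omega)]; rfl

theorem πB_rel {x : FA K n} (h : x ∈ rels K n) : πB K n x = 0 := by
  have := RingQuot.mkAlgHom_rel K (s := BRel K n) (x := x) (y := 0) ⟨h, rfl⟩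
  rw [map_zero] at this
  exact this

theorem aB_out (i : ℤ) (h : ¬ (0 ≤ i ∧ i ≤ (n : ℤ))) : aB K n i = 0 := by
  rw [aB, ga, dif_neg h, map_zero]
theorem bB_out (i : ℤ) (h : ¬ (0 ≤ i ∧ i ≤ (n : ℤ))) : bB K n i = 0 := by
  rw [bB, gb, dif_neg h, map_zero]
theorem cB_out (i : ℤ) (h : ¬ (0 ≤ i ∧ i ≤ (n : ℤ))) : cB K n i = 0 := by
  rw [cB, gc, dif_neg h, map_zero]

theorem rel_cc (i : ℤ) : cB K n i * cB K n (i + 1) = 0 := by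
  by_cases h : 0 ≤ i ∧ i < (n : ℤ)
  · obtain ⟨k, rfl⟩ := Int.eq_ofNat_of_zero_le h.1
    rw [cB, cB, ← map_mul]
    exact πB_rel K n (Or.inr (Or.inr ⟨k, by omega, Or.inr (Or.inr (Or.inl rfl))⟩))
  · by_cases h0 : 0 ≤ i
    · rw [cB_out K n (i + 1) (by omega), mul_zero]
    · rw [cB_out K n i (by omega), zero_mul]

theorem rel_ba (i : ℤ) : bB K n (i + 1) * aB K n i = 0 := by
  by_cases h : 0 ≤ i ∧ i < (n : ℤ)
  · obtain ⟨k, rfl⟩ := Int.eq_ofNat_of_zero_le h.1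
    rw [aB, bB, ← map_mul]
    exact πB_rel K n (Or.inr (Or.inr ⟨k, by omega, Or.inr (Or.inr (Or.inr rfl))⟩))
  · by_cases h0 : 0 ≤ i
    · rw [bB_out K n (i + 1) (by omega), zero_mul]
    · rw [aB_out K n i (by omega), mul_zero]

theorem rel_bca (i : ℕ) (h : i < n) :
    bB K n (i + 1) * cB K n (i + 1) * aB K n (i + 1) = 0 := by
  rw [aB, bB, cB, ← map_mul, ← map_mul]
  exact πB_rel K n (Or.inr (Or.inr ⟨i, h, Or.inr (Or.inl rfl)⟩))

theorem rel_abcn : aB K n n * bB K n n * cB K n n = 0 := by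
  rw [aB, bB, cB, ← map_mul, ← map_mul]
  exact πB_rel K n (Or.inl rfl)

theorem rel_ca0 : cB K n 0 * aB K n 0 = 0 := by
  rw [aB, cB, ← map_mul]
  exact πB_rel K n (Or.inr (Or.inl rfl))

theorem rel_abc (i : ℤ) : aB K n i * bB K n i * cB K n i
    + cB K n (i + 1) * aB K n (i + 1) * bB K n (i + 1) = 0 := by
  by_cases h : 0 ≤ i ∧ i < (n : ℤ)
  · obtain ⟨k, rfl⟩ := Int.eq_ofNat_of_zero_le h.1
    rw [aB, bB, cB, aB, bB, cB, ← map_mul, ← map_mul, ← map_mul, ← map_mul, ← map_add]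
    exact πB_rel K n (Or.inr (Or.inr ⟨k, by omega, Or.inl rfl⟩))
  · by_cases h1 : i = -1
    · subst h1
      rw [aB_out K n (-1) (by omega)]
      simp [rel_ca0]
    by_cases h2 : i = n
    · subst h2
      rw [aB_out K n (n + 1) (by omega), rel_abcn]
      simp
    · rw [aB_out K n (i + 1) (by omega), aB_out K n i (by omega)]
      simp

/-- image of a generator -/
def gB (x : Gen n) : B K n := πB K n (FreeAlgebra.ι K x)

variable (Q : Type) [AddCommGroup Q] [Module K Q] [Module (B K n) Q] [IsScalarTower K (B K n) Q]

/-- action of a generator on the extended module -/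
def act (e f : Gen n → K) (α β γ : Gen n → Q) (x : Gen n) :
    Module.End K (Q × K × K × K) where
  toFun p := (gB K n x • p.1 + p.2.1 • α x + p.2.2.1 • β x + p.2.2.2 • γ x,
    0, p.2.1 * e x, p.2.2.1 * f x)
  map_add' p q := by
    ext <;> simp [smul_add, add_smul, add_mul]
    abel
  map_smul' r p := by
    have : ∀ (z : B K n) (q : Q), z • r • q = r • z • q := fun z q => by
      rw [← algebraMap_smul (B K n) r q, ← algebraMap_smul (B K n) r (z • q), smul_smul, smul_smul,
        Algebra.commutes]
    ext <;> simp [smul_add, mul_smul, mul_assoc, this]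

theorem ext_mod (e f : Gen n → K) (α β γ : Gen n → Q)
    (hrel : ∀ r ∈ rels K n, FreeAlgebra.lift K (act K n Q e f α β γ) r = 0) :
    ∃ ρ : B K n →ₐ[K] Module.End K (Q × K × K × K),
      (∀ g, ρ (gB K n g) = act K n Q e f α β γ g) ∧
      ∀ z q, ρ z (q, 0, 0, 0) = (z • q, 0, 0, 0) := by
  refine ⟨RingQuot.liftAlgHom K ⟨FreeAlgebra.lift K (act K n Q e f α β γ), ?_⟩, ?_, ?_⟩
  · rintro x y ⟨hx, rfl⟩
    rw [hrel x hx, map_zero]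
  · intro g
    simp [gB, πB]
  · intro z
    obtain ⟨z, rfl⟩ := RingQuot.mkAlgHom_surjective K (BRel K n) z
    rw [RingQuot.liftAlgHom_mkAlgHom_apply]
    induction z using FreeAlgebra.induction with
    | grade0 r =>
      intro q
      simp
    | grade1 x =>
      intro q
      simp [act, gB, πB]
    | mul x y hx hy =>
      intro q
      rw [map_mul, Module.End.mul_apply, hy, hx, map_mul, mul_smul]
    | add x y hx hy =>
      intro q
      rw [map_add, LinearMap.add_apply, hy, hx, map_add, add_smul]
      simp

theorem gB_a (i : ℕ) (h : i < n + 1) : gB K n (Gen.a ⟨i, h⟩) = aB K n i := by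
  rw [aB, ga_in K n i h]; rfl
theorem gB_b (i : ℕ) (h : i < n + 1) : gB K n (Gen.b ⟨i, h⟩) = bB K n i := by
  rw [bB, gb_in K n i h]; rfl
theorem gB_c (i : ℕ) (h : i < n + 1) : gB K n (Gen.c ⟨i, h⟩) = cB K n i := by
  rw [cB, gc_in K n i h]; rfl


theorem lift_base (e f : Gen n → K) (α β γ : Gen n → Q) (z : FA K n) (q : Q) :
    FreeAlgebra.lift K (act K n Q e f α β γ) z (q, 0, 0, 0) = (πB K n z • q, 0, 0, 0) := by
  induction z using FreeAlgebra.induction generalizing q with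
  | grade0 r => simp
  | grade1 x => simp [act, gB, πB]
  | mul x y hx hy =>
    rw [map_mul, Module.End.mul_apply, hy, hx, map_mul, mul_smul]
  | add x y hx hy =>
    rw [map_add, LinearMap.add_apply, hy, hx, map_add, add_smul]
    simp

theorem crit (e f : Gen n → K) (α β γ : Gen n → Q) (r : FA K n) (hr : r ∈ rels K n)
    (h1 : FreeAlgebra.lift K (act K n Q e f α β γ) r (0, 1, 0, 0) = 0)
    (h2 : FreeAlgebra.lift K (act K n Q e f α β γ) r (0, 0, 1, 0) = 0)
    (h3 : FreeAlgebra.lift K (act K n Q e f α β γ) r (0, 0, 0, 1) = 0) :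
    FreeAlgebra.lift K (act K n Q e f α β γ) r = 0 := by
  refine LinearMap.ext ?_
  rintro ⟨q, s, t, u⟩
  have : ((q, s, t, u) : Q × K × K × K) = (q, 0, 0, 0) + s • (0, 1, 0, 0) + t • (0, 0, 1, 0)
    + u • (0, 0, 0, 1) := by simp
  rw [this, map_add, map_add, map_add, map_smul, map_smul, map_smul, h1, h2, h3, lift_base,
    πB_rel K n hr]
  simp

theorem act_apply (e f : Gen n → K) (α β γ : Gen n → Q) (x : Gen n) (q : Q) (s t u : K) :
    act K n Q e f α β γ x (q, s, t, u) = (gB K n x • q + s • α x + t • β x + u • γ x,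
    0, s * e x, t * f x) := rfl

/-- selectors -/
def selA {Z : Type} [Zero Z] (j : ℕ) (z : Z) : Gen n → Z
  | .a i => if i.val = j then z else 0
  | .b _ => 0
  | .c _ => 0
def selB {Z : Type} [Zero Z] (j : ℕ) (z : Z) : Gen n → Z
  | .b i => if i.val = j then z else 0
  | .a _ => 0
  | .c _ => 0
def selC {Z : Type} [Zero Z] (j : ℕ) (z : Z) : Gen n → Z
  | .c i => if i.val = j then z else 0
  | .a _ => 0
  | .b _ => 0

theorem forall_rels (P : FA K n → Prop)
    (h1 : P (FreeAlgebra.ι K (Gen.a ⟨n, by omega⟩) * FreeAlgebra.ι K (Gen.b ⟨n, by omega⟩) *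
      FreeAlgebra.ι K (Gen.c ⟨n, by omega⟩)))
    (h2 : P (FreeAlgebra.ι K (Gen.c ⟨0, by omega⟩) * FreeAlgebra.ι K (Gen.a ⟨0, by omega⟩)))
    (h3 : ∀ (i : ℕ) (h : i < n), P (FreeAlgebra.ι K (Gen.a ⟨i, by omega⟩) *
      FreeAlgebra.ι K (Gen.b ⟨i, by omega⟩) *
      FreeAlgebra.ι K (Gen.c ⟨i, by omega⟩) + FreeAlgebra.ι K (Gen.c ⟨i + 1, by omega⟩) *
      FreeAlgebra.ι K (Gen.a ⟨i + 1, by omega⟩) * FreeAlgebra.ι K (Gen.b ⟨i + 1, by omega⟩)))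
    (h4 : ∀ (i : ℕ) (h : i < n), P (FreeAlgebra.ι K (Gen.b ⟨i + 1, by omega⟩) *
      FreeAlgebra.ι K (Gen.c ⟨i + 1, by omega⟩) * FreeAlgebra.ι K (Gen.a ⟨i + 1, by omega⟩)))
    (h5 : ∀ (i : ℕ) (h : i < n), P (FreeAlgebra.ι K (Gen.c ⟨i, by omega⟩) *
      FreeAlgebra.ι K (Gen.c ⟨i + 1, by omega⟩)))
    (h6 : ∀ (i : ℕ) (h : i < n), P (FreeAlgebra.ι K (Gen.b ⟨i + 1, by omega⟩) *
      FreeAlgebra.ι K (Gen.a ⟨i, by omega⟩))) :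
    ∀ r ∈ rels K n, P r := by
  rintro r (rfl | rfl | ⟨i, hi, rfl | rfl | rfl | rfl⟩)
  · rw [ga_in K n n (by omega), gb_in K n n (by omega), gc_in K n n (by omega)]; exact h1
  · have := ga_in K n 0 (by omega)
    have h' := gc_in K n 0 (by omega)
    rw [Nat.cast_zero] at this h'
    rw [this, h']; exact h2
  all_goals
    have ha := ga_in K n (i + 1) (by omega)
    have hb := gb_in K n (i + 1) (by omega)
    have hc := gc_in K n (i + 1) (by omega)
    rw [Nat.cast_add, Nat.cast_one] at ha hb hc
    have ha' := ga_in K n i (by omega)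
    have hb' := gb_in K n i (by omega)
    have hc' := gc_in K n i (by omega)
  · rw [ha, hb, hc, ha', hb', hc']; exact h3 i hi
  · rw [ha, hb, hc]; exact h4 i hi
  · rw [hc, hc']; exact h5 i hi
  · rw [ha', hb]; exact h6 i hi


theorem F2gen (q0 : Q) (hA : (aB K n n * bB K n n) • q0 = 0) (hC : cB K n (n - 1) • q0 = 0)
    (x : B K n) (hx : x * cB K n n = 0) : x • q0 = 0 := by
  obtain ⟨ρ, h1, h2⟩ := ext_mod K n Q 0 0 (selC n n q0) 0 0 (by
    refine fun r hr => crit K n _ _ _ _ _ _ r hr ?_ ?_ ?_ <;> revert r <;> apply forall_rels <;>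
      (try intro i hi) <;>
      simp [act_apply, selC, gB_a, gB_b, gB_c]
    · rw [← mul_smul, hA]
    · omega
    · intro h
      have : (i : ℤ) = n - 1 := by omega
      simp [this, hC])
  have h3 : ρ (x * cB K n n) (0, 1, 0, 0) = (x • q0, 0, 0, 0) := by
    rw [map_mul, Module.End.mul_apply, ← gB_c K n n (by omega), h1, ← h2]
    simp [act_apply, selC]
  rw [hx, map_zero] at h3
  exact (congrArg Prod.fst h3).symm

theorem F3gen (q0 : Q) (hC : cB K n n • q0 = 0)
    (x y : B K n) (hx : x * (aB K n n * bB K n n) + y * cB K n (n - 1) = 0) : x • q0 = 0 := by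
  obtain ⟨ρ, h1, h2⟩ := ext_mod K n Q (selB n n 1) 0 0 (selA n n q0) 0 (by
    refine fun r hr => crit K n _ _ _ _ _ _ r hr ?_ ?_ ?_ <;> revert r <;> apply forall_rels <;>
      (try intro i hi) <;>
      simp [act_apply, selA, selB, gB_a, gB_b, gB_c]
    · rintro rfl
      exact_mod_cast hC
    · by_cases h : 0 = n
      · subst h
        rw [if_pos rfl]
        have h' : gB K 0 (Gen.c 0) = cB K 0 0 := gB_c K 0 0 (by omega)
        rw [h']
        exact hC
      · refine Eq.trans (congrArg _ (if_neg h)) (smul_zero _)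
    · rintro rfl
      have : cB K (i + 1) ((i : ℤ) + 1) • q0 = 0 := by exact_mod_cast hC
      rw [this, smul_zero]
    · omega)
  have h3 : ρ (x * (aB K n n * bB K n n) + y * cB K n (n - 1)) (0, 1, 0, 0)
      = (x • q0, 0, 0, 0) := by
    have hc0 : ρ (cB K n (n - 1)) (0, 1, 0, 0) = 0 := by
      by_cases h : n = 0
      · subst h
        rw [cB_out K 0 _ (by simp), map_zero]; rfl
      · have := gB_c K n (n - 1) (by omega)
        rw [Nat.cast_sub (by omega), Nat.cast_one] at this
        rw [← this, h1]
        simp [act_apply, selA, selB]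
    rw [map_add, map_mul, map_mul, map_mul, LinearMap.add_apply, Module.End.mul_apply,
      Module.End.mul_apply, Module.End.mul_apply, hc0, map_zero, add_zero,
      ← gB_a K n n (by omega), ← gB_b K n n (by omega), h1, h1, ← h2]
    simp [act_apply, selA, selB]
  rw [hx, map_zero] at h3
  exact (congrArg Prod.fst h3).symm

theorem F1gen (j : ℕ) (hj : j < n) (q0 : Q) (hC : cB K n (j - 1) • q0 = 0)
    (x : B K n) (hx : x * cB K n j = 0) : x • q0 = 0 := by
  obtain ⟨q1, hq1⟩ : ∃ q1 : Q, q1 = - ((aB K n j * bB K n j) • q0) := ⟨_, rfl⟩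
  have hb : bB K n (j + 1) • q1 = 0 := by
    rw [hq1, smul_neg, ← mul_smul, ← mul_assoc, rel_ba]; simp
  have hc : cB K n j • q1 = 0 := by
    have h := rel_abc K n (j - 1)
    rw [sub_add_cancel] at h
    rw [hq1, smul_neg, ← mul_smul, ← mul_assoc, ← neg_smul, ← eq_neg_of_add_eq_zero_left h,
      mul_smul, hC, smul_zero]
  obtain ⟨ρ, h1, h2⟩ := ext_mod K n Q (selB n (j + 1) 1) (selA n (j + 1) 1)
    (selC n j q0) 0 (selC n (j + 1) q1) (by
    refine fun r hr => crit K n _ _ _ _ _ _ r hr ?_ ?_ ?_ <;> revert r <;> apply forall_rels <;>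
      (try intro i hi) <;>
      simp [act_apply, selA, selB, selC, gB_a, gB_b, gB_c]
    · omega
    · by_cases h : i = j
      · subst h
        simp [hq1, mul_smul]
      · simp [h]
    · rintro rfl
      simpa using hC
    · rintro rfl
      exact hb
    · rintro rfl
      have : bB K (j + 1) ((j + 1 : ℕ) : ℤ) • q1 = 0 := by exact_mod_cast hb
      rw [this, smul_zero]
    · rintro rfl
      have : bB K n ((j + 1 : ℕ) : ℤ) • q1 = 0 := by exact_mod_cast hb
      rw [this, smul_zero]
    · rintro rfl
      exact hc)
  have h3 : ρ (x * cB K n j) (0, 1, 0, 0) = (x • q0, 0, 0, 0) := by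
    rw [map_mul, Module.End.mul_apply, ← gB_c K n j (by omega), h1, ← h2]
    simp [act_apply, selB, selC]
  rw [hx, map_zero] at h3
  exact (congrArg Prod.fst h3).symm

theorem quot_aux (I : Submodule (B K n) (B K n)) (z : B K n) :
    z • (I.mkQ 1) = 0 ↔ z ∈ I := by
  rw [← map_smul, smul_eq_mul, mul_one, Submodule.mkQ_apply, Submodule.Quotient.mk_eq_zero]

theorem F2 (x : B K n) (hx : x * cB K n n = 0) :
    ∃ u w : B K n, x = u * (aB K n n * bB K n n) + w * cB K n (n - 1) := by
  let I : Submodule (B K n) (B K n) :=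
    Submodule.span (B K n) {aB K n n * bB K n n, cB K n (n - 1)}
  have h5 := (quot_aux K n I x).1 (F2gen K n (B K n ⧸ I) _
    ((quot_aux K n I _).2 (Submodule.subset_span (by simp)))
    ((quot_aux K n I _).2 (Submodule.subset_span (by simp))) x hx)
  obtain ⟨u, w, h6⟩ := Submodule.mem_span_pair.1 h5
  exact ⟨u, w, by rw [← h6]; rfl⟩

theorem F3 (x y : B K n) (hx : x * (aB K n n * bB K n n) + y * cB K n (n - 1) = 0) :
    ∃ u : B K n, x = u * cB K n n := by
  let I : Submodule (B K n) (B K n) := Submodule.span (B K n) {cB K n n}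
  have h5 := (quot_aux K n I x).1 (F3gen K n (B K n ⧸ I) _
    ((quot_aux K n I _).2 (Submodule.subset_span (by simp))) x y hx)
  obtain ⟨u, h6⟩ := Submodule.mem_span_singleton.1 h5
  exact ⟨u, by rw [← h6]; rfl⟩

theorem F1 (j : ℤ) (hj0 : 0 ≤ j) (hj : j < n) (x : B K n) (hx : x * cB K n j = 0) :
    ∃ u : B K n, x = u * cB K n (j - 1) := by
  obtain ⟨j, rfl⟩ := Int.eq_ofNat_of_zero_le hj0
  let I : Submodule (B K n) (B K n) := Submodule.span (B K n) {cB K n (j - 1)}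
  have h5 := (quot_aux K n I x).1 (F1gen K n (B K n ⧸ I) j (by omega) _
    ((quot_aux K n I _).2 (Submodule.subset_span (by simp))) x hx)
  obtain ⟨u, h6⟩ := Submodule.mem_span_singleton.1 h5
  exact ⟨u, by rw [← h6]; rfl⟩


/-- `a_i b_i` -/
def AB (i : ℤ) : B K n := aB K n i * bB K n i

theorem AB_AB (i : ℤ) : AB K n (i + 1) * AB K n i = 0 := by
  rw [AB, AB, mul_assoc, ← mul_assoc (bB K n (i + 1)), rel_ba]; simp

theorem C_AB (i : ℤ) : cB K n (i + 1) * AB K n (i + 1) = - (AB K n i * cB K n i) := by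
  have := rel_abc K n i
  rw [AB, AB, ← mul_assoc]
  exact eq_neg_of_add_eq_zero_right this

theorem AB_out (i : ℤ) (h : ¬ (0 ≤ i ∧ i ≤ (n : ℤ))) : AB K n i = 0 := by
  rw [AB, aB_out K n i h, zero_mul]

theorem ring1 {R : Type} [Ring R] (x w a c : R) (h : w * -(a * c) + x * c = 0) :
    (x - w * a) * c = 0 := by
  rw [sub_mul, mul_assoc, ← h, mul_neg]; abel

theorem ring2 {R : Type} [Ring R] (w y : R) : w * -y + w * y = 0 := by simp

theorem exactR (k L : ℕ) (hk : 1 ≤ k) (hL : L ≤ k + 1) (hL2 : L ≤ (n + 1) / 2 + 1) (v : ℕ → B K n)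
    (hv : ∀ t < k, v t * AB K n (n - 2 * t) + v (t + 1) * cB K n (n - 2 * t - 1) = 0) :
    ∃ w : ℕ → B K n, ∀ t < L, v t = w t * cB K n (n - 2 * t) + w (t - 1) * AB K n (n + 1 - 2 * t) := by
  suffices H : ∀ T ≤ L, ∃ w : ℕ → B K n, ∀ t < T,
      v t = w t * cB K n (n - 2 * t) + w (t - 1) * AB K n (n + 1 - 2 * t) from H L le_rfl
  intro T
  induction T with
  | zero => intro _; exact ⟨0, by simp⟩
  | succ T ih =>
    intro hT
    obtain ⟨w, hw⟩ := ih (by omega)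
    have hx : ∃ u, v T = u * cB K n (n - 2 * T) + w (T - 1) * AB K n (n + 1 - 2 * T) := by
      rcases T with _ | T
      · obtain ⟨u, hu⟩ := F3 K n (v 0) (v 1) (by simpa [AB] using hv 0 (by omega))
        refine ⟨u, ?_⟩
        rw [AB_out K n _ (by simp)]
        simpa using hu
      · have e1 := hv T (by omega)
        rw [hw T (by omega)] at e1
        have a1 := AB_AB K n (n - 2 * T)
        have a2 := C_AB K n (n - 2 * T - 1)
        rw [sub_add_cancel] at a2
        rw [show (n : ℤ) + 1 - 2 * T = n - 2 * T + 1 by ring, add_mul, mul_assoc, mul_assoc, a1, a2,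
          mul_zero, add_zero] at e1
        obtain ⟨u, hu⟩ := F1 K n _ (by omega) (by omega) _ (ring1 _ _ _ _ e1)
        refine ⟨u, ?_⟩
        rw [sub_eq_iff_eq_add] at hu
        rw [hu]
        congr 3 <;> push_cast <;> ring
    obtain ⟨u, hu⟩ := hx
    refine ⟨Function.update w T u, fun t ht => ?_⟩
    by_cases h : t = T
    · subst h
      rw [Function.update_self]
      rcases t with _ | t
      · rw [hu, AB_out K n _ (by simp)]
        simp
      · rw [Function.update_of_ne (by omega)]
        exact hu
    · rw [Function.update_of_ne h, Function.update_of_ne (by omega)]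
      exact hw t (by omega)

theorem exactU (k L : ℕ) (hk : 1 ≤ k) (hL : L ≤ k) (hL2 : L ≤ n / 2 + 1) (v : ℕ → B K n)
    (hv : ∀ t < k, v t * cB K n (n - 2 * t) + v (t - 1) * AB K n (n + 1 - 2 * t) = 0) :
    ∃ w : ℕ → B K n, ∀ t < L, v t = w t * AB K n (n - 2 * t) + w (t + 1) * cB K n (n - 2 * t - 1) := by
  suffices H : ∀ T ≤ L, ∃ w : ℕ → B K n, ∀ t < T,
      v t = w t * AB K n (n - 2 * t) + w (t + 1) * cB K n (n - 2 * t - 1) from H L le_rfl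
  intro T
  induction T with
  | zero => intro _; exact ⟨0, by simp⟩
  | succ T ih =>
    intro hT
    obtain ⟨w, hw⟩ := ih (by omega)
    rcases T with _ | T
    · have h0 := hv 0 (by omega)
      rw [AB_out K n _ (by simp)] at h0
      obtain ⟨u, u', hu⟩ := F2 K n (v 0) (by simpa using h0)
      refine ⟨fun t => if t = 0 then u else u', fun t ht => ?_⟩
      obtain rfl : t = 0 := by omega
      simpa [AB] using hu
    · have e1 := hv (T + 1) (by omega)
      rw [Nat.add_sub_cancel, hw T (by omega)] at e1
      have a1 := AB_AB K n (n - 2 * T - 1)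
      have a2 := C_AB K n (n - 2 * T - 2)
      rw [sub_add_cancel] at a1
      rw [show (n : ℤ) - 2 * T - 2 + 1 = n - 2 * T - 1 by ring] at a2
      rw [show (n : ℤ) + 1 - 2 * (T + 1 : ℕ) = n - 2 * T - 1 by push_cast; ring,
        show (n : ℤ) - 2 * (T + 1 : ℕ) = n - 2 * T - 2 by push_cast; ring, add_mul,
        mul_assoc (w T), mul_assoc (w (T + 1)), a1, a2,
        mul_zero, zero_add, add_comm] at e1
      obtain ⟨u, hu⟩ := F1 K n _ (by omega) (by omega) _ (ring1 _ _ _ _ e1)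
      rw [sub_eq_iff_eq_add] at hu
      refine ⟨Function.update w (T + 2) u, fun t ht => ?_⟩
      by_cases h : t = T + 1
      · subst h
        rw [Function.update_self, Function.update_of_ne (by omega), hu, add_comm]
        congr 3 <;> push_cast <;> ring
      · rw [Function.update_of_ne (by omega), Function.update_of_ne (by omega)]
        exact hw t (by omega)

theorem compUR (w : ℕ → B K n) (t : ℕ) :
    (w t * cB K n (n - 2 * t) + w (t - 1) * AB K n (n + 1 - 2 * t)) * AB K n (n - 2 * t)
    + (w (t + 1) * cB K n (n - 2 * (t + 1 : ℕ)) + w t * AB K n (n + 1 - 2 * (t + 1 : ℕ)))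
      * cB K n (n - 2 * t - 1) = 0 := by
  have a1 := AB_AB K n (n - 2 * t)
  have a2 := C_AB K n (n - 2 * t - 1)
  have a3 := rel_cc K n (n - 2 * t - 2)
  rw [sub_add_cancel] at a2
  rw [show (n : ℤ) - 2 * t - 2 + 1 = n - 2 * t - 1 by ring] at a3
  rw [show (n : ℤ) + 1 - 2 * (t + 1 : ℕ) = n - 2 * t - 1 by push_cast; ring,
    show (n : ℤ) - 2 * (t + 1 : ℕ) = n - 2 * t - 2 by push_cast; ring,
    show (n : ℤ) + 1 - 2 * t = n - 2 * t + 1 by ring]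
  simp only [add_mul, mul_assoc, a1, a2, a3, mul_zero, add_zero, zero_add]
  exact ring2 _ _

theorem compRU (w : ℕ → B K n) (t : ℕ) :
    (w (t + 1) * AB K n (n - 2 * (t + 1 : ℕ)) + w (t + 2) * cB K n (n - 2 * (t + 1 : ℕ) - 1))
      * cB K n (n - 2 * (t + 1 : ℕ))
    + (w t * AB K n (n - 2 * t) + w (t + 1) * cB K n (n - 2 * t - 1))
      * AB K n (n + 1 - 2 * (t + 1 : ℕ)) = 0 := by
  have a1 := AB_AB K n (n - 2 * t - 1)
  have a2 := C_AB K n (n - 2 * t - 2)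
  have a3 := rel_cc K n (n - 2 * t - 3)
  rw [sub_add_cancel] at a1
  rw [show (n : ℤ) - 2 * t - 2 + 1 = n - 2 * t - 1 by ring] at a2
  rw [show (n : ℤ) - 2 * t - 3 + 1 = n - 2 * t - 2 by ring] at a3
  rw [show (n : ℤ) + 1 - 2 * (t + 1 : ℕ) = n - 2 * t - 1 by push_cast; ring,
    show (n : ℤ) - 2 * (t + 1 : ℕ) = n - 2 * t - 2 by push_cast; ring,
    show (n : ℤ) - 2 * t - 2 - 1 = n - 2 * t - 3 by ring]
  simp only [add_mul, mul_assoc, a1, a2, a3, mul_zero, add_zero, zero_add]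
  rw [add_comm]
  exact ring2 _ _

theorem compU0 (w : ℕ → B K n) :
    (w 0 * AB K n n + w 1 * cB K n (n - 1)) * cB K n n = 0 := by
  have a3 := rel_cc K n (n - 1)
  rw [sub_add_cancel] at a3
  rw [add_mul, mul_assoc, mul_assoc, a3, AB, rel_abcn]
  simp

end Alg

section Mats

/-- A bundled matrix from a function on naturals. -/
def ofFun {R : Type} [Semiring R] (r c : ℕ) (f : ℕ → ℕ → R) : MatB R :=
  ⟨r, c, Matrix.of fun i j => f i j⟩

theorem ofFun_congr {R : Type} [Semiring R] {r c r' c' : ℕ} {f f' : ℕ → ℕ → R}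
    (hr : r = r') (hc : c = c') (h : ∀ i < r, ∀ j < c, f i j = f' i j) :
    ofFun r c f = ofFun r' c' f' := by
  subst hr hc
  unfold ofFun
  congr 1
  ext i j
  exact h i i.2 j j.2

theorem ofFun_star {R : Type} [Semiring R] {r c r' c' : ℕ} {f f' : ℕ → ℕ → R} :
    (ofFun r c f).star (ofFun r' c' f') = ofFun (r + r' - 1) (c + c') (fun i j =>
      if i < r ∧ j < c then f i j else if r - 1 ≤ i ∧ c ≤ j then f' (i - (r - 1)) (j - c)
      else 0) := by
  unfold ofFun MatB.star
  congr 1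

variable (K : Type) [Field K] (n : ℕ)

def fR (i j : ℕ) : B K n :=
  if i = j then AB K n (n - 2 * j) else if i = j + 1 then cB K n (n - 2 * j - 1) else 0
def fU (i j : ℕ) : B K n :=
  if i = j then cB K n (n - 2 * j) else if j = i + 1 then AB K n (n + 1 - 2 * j) else 0

theorem GammaMat_eq (i : ℤ) : GammaMat K n i = ofFun (if i = 0 then 1 else 2) 1
    (fun r _ => if r = 0 then AB K n i else cB K n (i - 1)) := by
  unfold GammaMat
  split_ifs with h
  · subst h
    unfold ofFun
    congr 1
    ext r c
    obtain rfl : r = 0 := Subsingleton.elim _ _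
    obtain rfl : c = 0 := Subsingleton.elim _ _
    simp [AB]
  · unfold ofFun
    congr 1
    ext r c
    obtain rfl : c = 0 := Subsingleton.elim _ _
    fin_cases r <;> simp [AB, GammaP]

theorem Rfold (m : ℕ) (hm : 2 * m ≤ n) :
    (((List.range m).map fun t : ℕ => (n : ℤ) - 2 * (t + 1))).foldl
    (starGamma K n) (GammaMat K n n) =
    ofFun (if 2 * m = n then m + 1 else m + 2) (m + 1) (fR K n) := by
  induction m with
  | zero =>
    simp only [List.range_zero, List.map_nil, List.foldl_nil]
    rw [GammaMat_eq]
    apply ofFun_congr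
    · split_ifs <;> omega
    · rfl
    · intro i hi j hj
      obtain rfl : j = 0 := by omega
      have : i < 2 := by split_ifs at hi <;> omega
      interval_cases i <;> simp [fR]
  | succ m ih =>
    rw [List.range_succ, List.map_append, List.foldl_append, ih (by omega)]
    simp only [List.map_cons, List.map_nil, List.foldl_cons, List.foldl_nil]
    rw [starGamma, if_neg (by omega), GammaMat_eq, ofFun_star, if_neg (by omega)]
    apply ofFun_congr
    · split_ifs <;> omega
    · rfl
    · intro i hi j hj
      have hi2 : i < m + 3 := by split_ifs at hi <;> omega
      by_cases hj2 : j < m + 1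
      · by_cases hi3 : i < m + 2
        · rw [if_pos ⟨hi3, hj2⟩]
        · rw [if_neg (by omega), if_neg (by omega), fR, if_neg (by omega), if_neg (by omega)]
      · obtain rfl : j = m + 1 := by omega
        rw [if_neg (by omega)]
        by_cases hi3 : m + 1 ≤ i
        · rw [if_pos (by omega)]
          obtain rfl | rfl : i = m + 1 ∨ i = m + 2 := by omega
          · simp [fR]
          · simp [fR]
        · rw [if_neg (by omega), fR, if_neg (by omega), if_neg (by omega)]

theorem Ufold (m : ℕ) (hm : 2 * m ≤ n + 1) :
    (((List.range m).map fun t : ℕ => (n : ℤ) - 1 - 2 * t)).foldl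
    (starGamma K n) ⟨1, 1, !![cB K n n]⟩ =
    ofFun (if 2 * m = n + 1 then m else m + 1) (m + 1) (fU K n) := by
  induction m with
  | zero =>
    simp only [List.range_zero, List.map_nil, List.foldl_nil]
    unfold ofFun
    rw [if_neg (by omega)]
    congr 1
    ext r c
    obtain rfl : r = 0 := Subsingleton.elim _ _
    obtain rfl : c = 0 := Subsingleton.elim _ _
    simp [fU]
  | succ m ih =>
    rw [List.range_succ, List.map_append, List.foldl_append, ih (by omega)]
    simp only [List.map_cons, List.map_nil, List.foldl_cons, List.foldl_nil]
    rw [starGamma, if_neg (by omega), GammaMat_eq, ofFun_star, if_neg (by omega)]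
    apply ofFun_congr
    · split_ifs <;> omega
    · rfl
    · intro i hi j hj
      have hi2 : i < m + 2 := by split_ifs at hi <;> omega
      by_cases hj2 : j < m + 1
      · by_cases hi3 : i < m + 1
        · rw [if_pos ⟨hi3, hj2⟩]
        · rw [if_neg (by omega), if_neg (by omega), fU, if_neg (by omega), if_neg (by omega)]
      · obtain rfl : j = m + 1 := by omega
        rw [if_neg (by omega)]
        by_cases hi3 : m ≤ i
        · rw [if_pos (by omega)]
          obtain rfl | rfl : i = m ∨ i = m + 1 := by omega
          · simp only [fU]
            simp
            congr 1; ring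
          · simp only [fU]
            simp
            congr 1; ring
        · rw [if_neg (by omega), fU, if_neg (by omega), if_neg (by omega)]

theorem Rmat_eq (p : ℕ) : Rmat K n p = (((List.range ((n - p) / 2)).map
    fun t : ℕ => (n : ℤ) - 2 * (t + 1))).foldl (starGamma K n) (GammaMat K n n) := by
  unfold Rmat
  rw [bind_pure_comp, List.map_eq_map, List.map_map]
  rfl

theorem Umat_eq (p : ℕ) : Umat K n p = (((List.range ((n - p) / 2 + 1)).map
    fun t : ℕ => (n : ℤ) - 1 - 2 * t)).foldl (starGamma K n) ⟨1, 1, !![cB K n n]⟩ := by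
  unfold Umat
  rw [bind_pure_comp, List.map_eq_map, List.map_map]
  rfl

def rk (j : ℕ) : ℕ := min ((j + 1) / 2) ((n + j % 2) / 2) + 1

theorem DC_eq (j : ℕ) : DC K n j =
    ofFun (rk n (j + 1)) (rk n j) (if j % 2 = 0 then fR K n else fU K n) := by
  unfold DC
  by_cases hj : j % 2 = 0
  · have key : ∀ p, 2 * ((n - p) / 2) ≤ n := fun p => by omega
    simp only [if_pos hj]
    split_ifs with h
    · rw [Rmat_eq, Rfold K n _ (key _)]
      apply ofFun_congr
      · unfold rk; split_ifs <;> omega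
      · unfold rk; omega
      · intros; rfl
    · rw [Rmat_eq, Rfold K n _ (key _)]
      apply ofFun_congr
      · unfold rk; split_ifs <;> omega
      · unfold rk; omega
      · intros; rfl
  · simp only [if_neg hj]
    split_ifs with h
    · rw [Umat_eq, Ufold K n _ (by omega)]
      apply ofFun_congr
      · unfold rk; split_ifs <;> omega
      · unfold rk; omega
      · intros; rfl
    · by_cases hn : n = 0
      · subst hn
        have := Ufold K 0 0 (by omega)
        simp only [List.range_zero, List.map_nil, List.foldl_nil] at this
        simp only [Umat]
        simp [starGamma]
        simp at this
        rw [this]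
        apply ofFun_congr
        · unfold rk; omega
        · unfold rk; omega
        · intros; rfl
      · rw [Umat_eq, Ufold K n _ (by omega)]
        apply ofFun_congr
        · unfold rk; split_ifs <;> omega
        · unfold rk; omega
        · intros; rfl


theorem fin_exact {R : Type} [Semiring R] (P P' : MatB R) {r c r' c' : ℕ} {f f' : ℕ → ℕ → R}
    (hP : P = ofFun r c f) (hP' : P' = ofFun r' c' f')
    (key : ∀ v : ℕ → R, (∀ t, c' ≤ t → v t = 0) →
      ((∀ t < c, ∑ i ∈ Finset.range r, v i * f i t = 0) ↔
        ∃ w : ℕ → R, ∀ t < c', v t = ∑ i ∈ Finset.range r', w i * f' i t))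
    (h : P'.cols = P.rows) (v : Fin P'.cols → R) :
    Matrix.vecMul (v ∘ Fin.cast h.symm) P.M = 0 ↔
      ∃ w : Fin P'.rows → R, v = Matrix.vecMul w P'.M := by
  subst hP hP'
  have h' : c' = r := h
  subst h'
  have k := key (fun i => if hi : i < c' then v ⟨i, hi⟩ else 0)
    (fun t ht => dif_neg (by omega))
  simp only [Finset.sum_range, Fin.is_lt, dif_pos] at k
  refine Iff.trans ?_ (k.trans ?_)
  · constructor
    · intro H t ht
      exact congrFun H ⟨t, ht⟩
    · intro H
      funext t
      exact H t.1 t.2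
  · constructor
    · rintro ⟨w, hw⟩
      refine ⟨fun i => w i, ?_⟩
      funext t
      have := hw t.1 t.2
      rw [dif_pos (show t.1 < c' from t.2)] at this
      exact this
    · rintro ⟨w, hw⟩
      refine ⟨fun i => if hi : i < r' then w ⟨i, hi⟩ else 0, fun t ht => ?_⟩
      rw [dif_pos ht, hw]
      simp only [Fin.is_lt, dif_pos]
      rfl

def tr {R : Type} [Zero R] (r : ℕ) (v : ℕ → R) (i : ℕ) : R := if i < r then v i else 0

theorem sumR (r : ℕ) (v : ℕ → B K n) (t : ℕ) : ∑ i ∈ Finset.range r, v i * fR K n i t =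
    tr r v t * AB K n (n - 2 * t) + tr r v (t + 1) * cB K n (n - 2 * t - 1) := by
  have : ∀ i ∈ Finset.range r, v i * fR K n i t = (if i = t then v i * AB K n (n - 2 * t) else 0) +
      (if i = t + 1 then v i * cB K n (n - 2 * t - 1) else 0) := by
    intro i _
    unfold fR
    by_cases h1 : i = t
    · rw [if_pos h1, if_pos h1, if_neg (by omega), add_zero]
    · rw [if_neg h1, if_neg h1, zero_add]
      split_ifs
      · rfl
      · rw [mul_zero]
  rw [Finset.sum_congr rfl this, Finset.sum_add_distrib, Finset.sum_ite_eq', Finset.sum_ite_eq']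
  simp only [tr, Finset.mem_range, ite_mul, zero_mul]

theorem sumU (r : ℕ) (v : ℕ → B K n) (t : ℕ) : ∑ i ∈ Finset.range r, v i * fU K n i t =
    tr r v t * cB K n (n - 2 * t) + tr r v (t - 1) * AB K n (n + 1 - 2 * t) := by
  have : ∀ i ∈ Finset.range r, v i * fU K n i t = (if i = t then v i * cB K n (n - 2 * t) else 0) +
      (if i = t - 1 then v i * AB K n (n + 1 - 2 * t) else 0) := by
    intro i _
    unfold fU
    by_cases h0 : t = 0
    · subst h0
      rw [AB_out K n (n + 1 - 2 * (0 : ℕ)) (by simp)]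
      simp
    by_cases h1 : i = t
    · rw [if_pos h1, if_pos h1, if_neg (by omega), add_zero]
    · rw [if_neg h1, if_neg h1, zero_add]
      split_ifs
      · rfl
      · omega
      · omega
      · rw [mul_zero]
  rw [Finset.sum_congr rfl this, Finset.sum_add_distrib, Finset.sum_ite_eq', Finset.sum_ite_eq']
  simp only [tr, Finset.mem_range, ite_mul, zero_mul]

theorem tr_of {R : Type} [Zero R] (r : ℕ) (v : ℕ → R) (hv : ∀ t, r ≤ t → v t = 0) :
    tr r v = v := by
  funext i
  unfold tr
  split_ifs with h
  · rfl
  · rw [hv i (by omega)]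

theorem keyR (j : ℕ) (hj : j % 2 = 0) (v : ℕ → B K n) (hv : ∀ t, rk n (j + 1) ≤ t → v t = 0) :
    (∀ t < rk n j, ∑ i ∈ Finset.range (rk n (j + 1)), v i * fR K n i t = 0) ↔
    ∃ w : ℕ → B K n, ∀ t < rk n (j + 1),
      v t = ∑ i ∈ Finset.range (rk n (j + 2)), w i * fU K n i t := by
  simp only [sumR, sumU, tr_of _ v hv]
  constructor
  · intro H
    obtain ⟨w, hw⟩ := exactR K n (rk n j) (rk n (j + 1)) (by unfold rk; omega)
      (by unfold rk; omega) (by unfold rk; omega) v H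
    refine ⟨w, fun t ht => ?_⟩
    rw [hw t ht]
    congr 1
    · by_cases h : t < rk n (j + 2)
      · rw [tr, if_pos h]
      · rw [cB_out K n _ (by unfold rk at *; omega), mul_zero, mul_zero]
    · by_cases h : t = 0
      · subst h
        rw [AB_out K n _ (by simp), mul_zero, mul_zero]
      · rw [tr, if_pos (by unfold rk at *; omega)]
  · rintro ⟨w, hw⟩ t ht
    have := compUR K n (tr (rk n (j + 2)) w) t
    rw [hw t (by unfold rk at *; omega)]
    by_cases h : t + 1 < rk n (j + 1)
    · rw [hw (t + 1) h, Nat.add_sub_cancel]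
      exact this
    · rw [cB_out K n (n - 2 * t - 1) (by unfold rk at *; omega), mul_zero] at *
      exact this

theorem keyU (j : ℕ) (hj : j % 2 = 1) (v : ℕ → B K n) (hv : ∀ t, rk n (j + 1) ≤ t → v t = 0) :
    (∀ t < rk n j, ∑ i ∈ Finset.range (rk n (j + 1)), v i * fU K n i t = 0) ↔
    ∃ w : ℕ → B K n, ∀ t < rk n (j + 1),
      v t = ∑ i ∈ Finset.range (rk n (j + 2)), w i * fR K n i t := by
  simp only [sumR, sumU, tr_of _ v hv]
  constructor
  · intro H
    obtain ⟨w, hw⟩ := exactU K n (rk n j) (rk n (j + 1)) (by unfold rk; omega)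
      (by unfold rk; omega) (by unfold rk; omega) v H
    refine ⟨w, fun t ht => ?_⟩
    rw [hw t ht]
    congr 1
    · rw [tr, if_pos (by unfold rk at *; omega)]
    · by_cases h : t + 1 < rk n (j + 2)
      · rw [tr, if_pos h]
      · rw [cB_out K n _ (by unfold rk at *; omega), mul_zero, mul_zero]
  · rintro ⟨w, hw⟩ t ht
    rcases t with _ | t
    · rw [hw 0 (by unfold rk; omega), AB_out K n (n + 1 - 2 * (0 : ℕ)) (by simp), mul_zero, add_zero]
      simpa using compU0 K n (tr (rk n (j + 2)) w)
    · have := compRU K n (tr (rk n (j + 2)) w) t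
      rw [Nat.add_sub_cancel, hw t (by unfold rk at *; omega)]
      by_cases h : t + 1 < rk n (j + 1)
      · rw [hw (t + 1) h]
        exact this
      · rw [cB_out K n (n - 2 * (t + 1 : ℕ)) (by unfold rk at *; omega), mul_zero] at *
        exact this

theorem aug_exact {R : Type} [Semiring R] (P : MatB R) {r c : ℕ} {f : ℕ → ℕ → R} (z : R)
    (hP : P = ofFun r c f) (hc : c = 1)
    (key : ∀ x : R, x * z = 0 ↔ ∃ w : ℕ → R, x = ∑ i ∈ Finset.range r, w i * f i 0)
    (v : Fin P.cols → R) : (∑ t, v t * z) = 0 ↔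
      ∃ w : Fin P.rows → R, v = Matrix.vecMul w P.M := by
  subst hP hc
  have e : (∑ t : Fin 1, v t * z) = v (0 : Fin 1) * z :=
    Fin.sum_univ_one (fun t : Fin 1 => v t * z)
  refine Iff.trans (Iff.of_eq (congrArg (· = 0) e)) ((key _).trans ?_)
  constructor
  · rintro ⟨w, hw⟩
    refine ⟨fun i => w i, ?_⟩
    funext t
    obtain rfl : t = (0 : Fin 1) := Subsingleton.elim (α := Fin 1) _ _
    rw [Finset.sum_range] at hw
    exact hw
  · rintro ⟨w, hw⟩
    refine ⟨fun i => if hi : i < r then w ⟨i, hi⟩ else 0, ?_⟩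
    rw [Finset.sum_range]
    simp only [Fin.is_lt, dif_pos]
    exact congrFun hw (0 : Fin 1)

theorem aug_onto {R : Type} [Semiring R] (c : ℕ) (hc : c = 1) (z y : R) :
    y ∈ Ideal.span {z} ↔ ∃ v : Fin c → R, y = ∑ t, v t * z := by
  subst hc
  rw [Ideal.mem_span_singleton']
  constructor
  · rintro ⟨a, rfl⟩
    exact ⟨fun _ => a, by simp⟩
  · rintro ⟨v, rfl⟩
    exact ⟨v 0, by simp⟩

theorem augkey (x : B K n) : x * cB K n n = 0 ↔
    ∃ w : ℕ → B K n, x = ∑ i ∈ Finset.range (rk n 1), w i * fR K n i 0 := by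
  simp only [sumR]
  constructor
  · intro h
    obtain ⟨u, u', hu⟩ := F2 K n x h
    refine ⟨fun t => if t = 0 then u else u', ?_⟩
    rw [hu, tr, if_pos (by unfold rk; omega), tr]
    by_cases hn : 1 < rk n 1
    · simp [hn, AB]
    · rw [cB_out K n (n - 1) (by unfold rk at *; omega), cB_out K n (n - 2 * (0 : ℕ) - 1) (by unfold rk at *; omega)]
      simp [AB]
  · rintro ⟨w, rfl⟩
    simpa using compU0 K n (tr (rk n 1) w)

end Mats

/-- Lemma 3.6.  The eventually periodic complex
`⋯ → F₃ → F₂ → F₁ = B → B c_n → 0` with augmentation `z ↦ z c_n` and differentials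
`R_n, U_{n−1}, R_{n−2}, …` (eventually `2`-periodic as in `DC`) is a free resolution of the
left ideal `B c_n`. -/
theorem stmt_13 (K : Type) [Field K] (n : ℕ) :
    -- the complex is well formed: consecutive matrices are composable, and `F₁ = B`
    (∀ j, (DC K n (j+1)).cols = (DC K n j).rows) ∧
    (DC K n 0).cols = 1 ∧
    -- the augmentation maps onto `B c_n`
    (∀ y, y ∈ Ideal.span {cB K n n} ↔
      ∃ v : Fin (DC K n 0).cols → B K n, y = ∑ t, v t * cB K n n) ∧
    -- exactness at `F₁`: ker(augmentation) = im(first differential)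
    (∀ v : Fin (DC K n 0).cols → B K n,
      (∑ t, v t * cB K n n) = 0 ↔
      ∃ w : Fin (DC K n 0).rows → B K n, v = Matrix.vecMul w (DC K n 0).M) ∧
    -- exactness at `F_{j+2}`: ker of the `(j+1)`-st differential = im of the `(j+2)`-nd
    (∀ j (h : (DC K n (j+1)).cols = (DC K n j).rows)
        (v : Fin (DC K n (j+1)).cols → B K n),
      Matrix.vecMul (v ∘ Fin.cast h.symm) (DC K n j).M = 0 ↔
      ∃ w : Fin (DC K n (j+1)).rows → B K n, v = Matrix.vecMul w (DC K n (j+1)).M) := by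
  have hc : ∀ j, (DC K n j).cols = rk n j := fun j => by rw [DC_eq]; rfl
  have hr : ∀ j, (DC K n j).rows = rk n (j + 1) := fun j => by rw [DC_eq]; rfl
  have h0 : rk n 0 = 1 := by unfold rk; omega
  refine ⟨fun j => by rw [hc, hr], by rw [hc, h0], ?_, ?_, ?_⟩
  · exact fun y => aug_onto _ (by rw [hc, h0]) _ y
  · exact aug_exact _ _ (DC_eq K n 0) h0 (augkey K n)
  · intro j
    rcases Nat.mod_two_eq_zero_or_one j with hj | hj
    · refine fin_exact _ _ (DC_eq K n j) (DC_eq K n (j + 1)) ?_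
      rw [if_pos hj, if_neg (by omega)]
      exact keyR K n j hj
    · refine fin_exact _ _ (DC_eq K n j) (DC_eq K n (j + 1)) ?_
      rw [if_neg (by omega), if_pos (by omega)]
      exact keyU K n j hj
end

section
/- Let 1 ≤ i ≤ n. For 0 ≤ p ≤ i with i ≡ p (mod 2), set T_{i,p} = T_i ⋆ Γ_{i−2} ⋆ Γ_{i−4} ⋆ ⋯ ⋆ Γ_p and S_{i,p−1} = (c_i a_i) ⋆ Γ_{i−1} ⋆ Γ_{i−3} ⋆ ⋯ ⋆ Γ_{p−1}, where T_i is the 2×1 column matrix with entries b_i and c_{i−1}. Then the eventually periodic complex of finitely generated free left B-modules ⋯ → F₃ → F₂ → F₁ = B² → B b_i + B c_{i−1} → 0, whose augmentation is (w, x) ↦ w b_i + x c_{i−1} and whose differentials, reading from the augmentation leftward, are right multiplication successively by S_{i,i−1}, T_{i,i−2}, S_{i,i−3}, T_{i,i−4}, …, and which thereafter continues 2-periodically with the pair (T_{i,0}, S_{i,1}) repeated when i is even and with the pair (S_{i,0}, T_{i,1}) repeated when i is odd (the ranks of the free modules F_j being dictated by the sizes of these matrices), is exact; i.e., it is a free resolution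 of the left ideal B b_i + B c_{i−1} of B. -/
/-- `T_{i,p} = T_i ⋆ Γ_{i−2} ⋆ Γ_{i−4} ⋆ ⋯ ⋆ Γ_p`, where `T_i` is the `2×1` column with
entries `b_i` and `c_{i−1}`. -/
def Tmat (K : Type) [Field K] (n : ℕ) (i : ℕ) (p : ℕ) : MatB (B K n) :=
  (((List.range ((i - p) / 2)).map fun t => (i : ℤ) - 2 * (t + 1))).foldl
    (starGamma K n) ⟨2, 1, !![bB K n i; cB K n ((i : ℤ) - 1)]⟩

/-- `S_{i,p−1} = (c_i a_i) ⋆ Γ_{i−1} ⋆ Γ_{i−3} ⋆ ⋯ ⋆ Γ_{p−1}` (this def takes `p`). -/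
def Smat (K : Type) [Field K] (n : ℕ) (i : ℕ) (p : ℕ) : MatB (B K n) :=
  (((List.range ((i - p) / 2 + 1)).map fun t => (i : ℤ) - 1 - 2 * t)).foldl
    (starGamma K n) ⟨1, 1, !![cB K n i * aB K n i]⟩

/-- The sequence of differentials of the complex of Lemma 3.7 resolving `B b_i + B c_{i−1}`:
`DQ i j` is the `(j+1)`-st differential (so `DQ i 0 : F₂ → F₁`), namely right multiplication
successively by `S_{i,i−1}, T_{i,i−2}, S_{i,i−3}, …`, continuing `2`-periodically with the
pair `(T_{i,0}, S_{i,1})` when `i` is even and `(S_{i,0}, T_{i,1})` when `i` is odd. -/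
def DQ (K : Type) [Field K] (n : ℕ) (i : ℕ) (j : ℕ) : MatB (B K n) :=
  if j < i then (if j % 2 = 0 then Smat K n i (i - j) else Tmat K n i (i - j - 1))
  else (if j % 2 = 0 then Smat K n i (2 - i % 2) else Tmat K n i (i % 2))

namespace Aux14

inductive Lt : Type
  | a : ℕ → Lt
  | b : ℕ → Lt
  | c : ℕ → Lt
  deriving DecidableEq

open Lt

/-- Bad heads; words are stored reversed (last letter first). -/
def bad (n : ℕ) : List Lt → Prop
  | c i :: b j :: a k :: _ => i = n ∧ j = n ∧ k = n
  | a i :: c j :: b k :: _ => (i = 0 ∧ j = 0) ∨ (i = j ∧ j = k)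
  | a i :: c j :: _ => i = 0 ∧ j = 0
  | b i :: a j :: c k :: _ => i = j ∧ j = k
  | c j :: c i :: _ => j = i + 1
  | a i :: b j :: _ => j = i + 1
  | _ => False

def Nor (n : ℕ) : List Lt → Prop
  | [] => True
  | x :: w => ¬ bad n (x :: w) ∧ Nor n w

variable (K : Type) [Field K] (n : ℕ)

abbrev NN := List Lt →₀ K

open Classical in
noncomputable def act (x : Lt) (w : List Lt) : NN K :=
  if Nor n w then
    if bad n (x :: w) then
      match x, w with
      | b i, a _ :: c _ :: w' =>
        if i = 0 then 0 else - Finsupp.single (c (i-1) :: b (i-1) :: a (i-1) :: w') 1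
      | _, _ => 0
    else Finsupp.single (x :: w) 1
  else 0

noncomputable def Act (x : Lt) : NN K →ₗ[K] NN K :=
  Finsupp.lsum K (fun w => LinearMap.toSpanSingleton K (NN K) (act K n x w))

theorem Act_single (x : Lt) (w : List Lt) (r : K) :
    Act K n x (Finsupp.single w r) = r • act K n x w := by
  simp [Act]

theorem rel_cc (i : ℕ) (f : NN K) : Act K n (c (i+1)) (Act K n (c i) f) = 0 := by
  induction f using Finsupp.induction_linear with
  | zero => simp
  | add f g hf hg => simp [hf, hg]
  | single w r =>
    rw [Act_single, map_smul]
    unfold act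
    split_ifs <;> simp [Act_single, act, bad]

theorem rel_ba (i : ℕ) (f : NN K) : Act K n (a i) (Act K n (b (i+1)) f) = 0 := by
  induction f using Finsupp.induction_linear with
  | zero => simp
  | add f g hf hg => simp [hf, hg]
  | single w r =>
    rw [Act_single, map_smul]
    unfold act
    split_ifs with h1 h2
    · rcases w with _ | ⟨_ | _ | _, _ | ⟨_ | _ | _, w⟩⟩ <;> simp [Act_single, act, bad] at *
    · simp [Act_single, act, bad]
    · simp

theorem rel_ca (f : NN K) : Act K n (a 0) (Act K n (c 0) f) = 0 := by
  induction f using Finsupp.induction_linear with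
  | zero => simp
  | add f g hf hg => simp [hf, hg]
  | single w r =>
    rw [Act_single, map_smul]
    unfold act
    split_ifs with h1 h2
    · simp
    · rcases w with _ | ⟨_ | _ | _, w⟩ <;> simp [Act_single, act, bad]
    · simp

theorem rel_bca (i : ℕ) (f : NN K) :
    Act K n (a (i+1)) (Act K n (c (i+1)) (Act K n (b (i+1)) f)) = 0 := by
  induction f using Finsupp.induction_linear with
  | zero => simp
  | add f g hf hg => simp [hf, hg]
  | single w r =>
    rw [Act_single, map_smul, map_smul]
    unfold act
    split_ifs with h1 h2
    · rcases w with _ | ⟨_ | _ | _, _ | ⟨_ | _ | _, w⟩⟩ <;> simp [Act_single, act, bad] at *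
    · rw [Act_single]
      unfold act
      split_ifs
      · simp
      · simp [Act_single, act, bad]
      · simp
    · simp

theorem rel_abcn (f : NN K) :
    Act K n (c n) (Act K n (b n) (Act K n (a n) f)) = 0 := by
  induction f using Finsupp.induction_linear with
  | zero => simp
  | add f g hf hg => simp [hf, hg]
  | single w r =>
    rw [Act_single, map_smul, map_smul]
    unfold act
    split_ifs with h1 h2
    · simp
    · rw [Act_single]
      unfold act
      split_ifs with h3 h4
      · rcases w with _ | ⟨_ | _ | _, w⟩ <;> simp [Act_single, act, bad] at *
        split_ifs
        · simp
        · have : n = n - 1 + 1 := by omega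
          simp [Act_single, act, bad, ← this]
      · simp [Act_single, act, bad]
      · simp
    · simp

theorem rel_main (i : ℕ) (hi : i < n) (f : NN K) :
    Act K n (c i) (Act K n (b i) (Act K n (a i) f)) +
    Act K n (b (i+1)) (Act K n (a (i+1)) (Act K n (c (i+1)) f)) = 0 := by
  induction f using Finsupp.induction_linear with
  | zero => simp
  | add f g hf hg =>
    simp only [map_add]
    rw [add_add_add_comm, hf, hg, add_zero]
  | single w r =>
    simp only [Act_single, map_smul]
    rw [← smul_add]
    convert smul_zero r
    have hne : i ≠ n := hi.ne
    by_cases hw : Nor n w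
    · by_cases h1 : ∃ w', w = c i :: w'
      · obtain ⟨w', rfl⟩ := h1
        have e1 : act K n (c (i+1)) (c i :: w') = 0 := by simp [act, bad]
        rw [e1]
        simp only [map_zero, add_zero]
        unfold act
        split_ifs with h2
        · simp
        · have h0 : i ≠ 0 := by
            rintro rfl
            rcases w' with _ | ⟨_ | _ | _, w⟩ <;> simp [bad] at h2
          have : i = i - 1 + 1 := by omega
          have nb : Nor n (a i :: c i :: w') := ⟨h2, hw⟩
          simp [Act_single, act, bad, nb, h0, ← this]
      · by_cases h2 : ∃ w', w = b (i+1) :: w'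
        · obtain ⟨w', rfl⟩ := h2
          have e1 : act K n (a i) (b (i+1) :: w') = 0 := by simp [act, bad]
          rw [e1]
          simp only [map_zero, zero_add]
          unfold act
          split_ifs with h3
          · simp
          · simp [Act_single, act, bad]
        · have g1 : ¬ bad n (a i :: w) := by
            rcases w with _ | ⟨_ | _ | _, _ | ⟨_ | _ | _, w⟩⟩ <;> simp [bad] at * <;> omega
          have g2 : ¬ bad n (b i :: a i :: w) := by
            rcases w with _ | ⟨_ | _ | _, w⟩ <;> simp [bad] at * <;> omega
          have g3 : ¬ bad n (c i :: b i :: a i :: w) := by simp [bad, hne]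
          have g4 : ¬ bad n (c (i+1) :: w) := by
            rcases w with _ | ⟨_ | _ | _, _ | ⟨_ | _ | _, w⟩⟩ <;> simp [bad] at * <;> omega
          have g5 : ¬ bad n (a (i+1) :: c (i+1) :: w) := by
            rcases w with _ | ⟨_ | _ | _, w⟩ <;> simp [bad] at * <;> omega
          have g6 : bad n (b (i+1) :: a (i+1) :: c (i+1) :: w) := by simp [bad]
          simp [act, Act_single, Nor, hw, g1, g2, g3, g4, g5, g6]
    · simp [act, hw]

/-! representation -/

noncomputable def genOp : Gen n → (Module.End K (NN K))ᵐᵒᵖ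
  | Gen.a i => MulOpposite.op (Act K n (a i.val))
  | Gen.b i => MulOpposite.op (Act K n (b i.val))
  | Gen.c i => MulOpposite.op (Act K n (c i.val))

noncomputable def rho0 : FA K n →ₐ[K] (Module.End K (NN K))ᵐᵒᵖ :=
  FreeAlgebra.lift K (genOp K n)

theorem ga_nat (i : ℕ) (h : i ≤ n) : ga K n i = FreeAlgebra.ι K (Gen.a ⟨i, by omega⟩) := by
  simp [ga, h]
theorem gb_nat (i : ℕ) (h : i ≤ n) : gb K n i = FreeAlgebra.ι K (Gen.b ⟨i, by omega⟩) := by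
  simp [gb, h]
theorem gc_nat (i : ℕ) (h : i ≤ n) : gc K n i = FreeAlgebra.ι K (Gen.c ⟨i, by omega⟩) := by
  simp [gc, h]

theorem rho0_a (i : ℕ) (h : i ≤ n) :
    rho0 K n (ga K n i) = MulOpposite.op (Act K n (a i)) := by
  simp [rho0, ga_nat K n i h, genOp]
theorem rho0_b (i : ℕ) (h : i ≤ n) :
    rho0 K n (gb K n i) = MulOpposite.op (Act K n (b i)) := by
  simp [rho0, gb_nat K n i h, genOp]
theorem rho0_c (i : ℕ) (h : i ≤ n) :
    rho0 K n (gc K n i) = MulOpposite.op (Act K n (c i)) := by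
  simp [rho0, gc_nat K n i h, genOp]

theorem rho0_rel (x : FA K n) (hx : x ∈ rels K n) : rho0 K n x = 0 := by
  apply MulOpposite.unop_injective
  apply LinearMap.ext
  intro f
  rcases hx with rfl | rfl | ⟨i, hi, rfl | rfl | rfl | rfl⟩
  · simp only [map_mul, rho0_a K n n le_rfl, rho0_b K n n le_rfl, rho0_c K n n le_rfl]
    simpa using rel_abcn K n f
  · have h1 := rho0_a K n 0 (by omega)
    have h2 := rho0_c K n 0 (by omega)
    push_cast at h1 h2
    simp only [map_mul, h1, h2]
    simpa using rel_ca K n f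
  all_goals
    have h1 := rho0_a K n i (by omega)
    have h2 := rho0_b K n i (by omega)
    have h3 := rho0_c K n i (by omega)
    have h4 := rho0_a K n (i+1) (by omega)
    have h5 := rho0_b K n (i+1) (by omega)
    have h6 := rho0_c K n (i+1) (by omega)
    push_cast at h1 h2 h3 h4 h5 h6
    simp only [map_mul, map_add, h1, h2, h3, h4, h5, h6]
  · simpa using rel_main K n i hi f
  · simpa using rel_bca K n i f
  · simpa using rel_cc K n i f
  · simpa using rel_ba K n i f

noncomputable def rho : B K n →ₐ[K] (Module.End K (NN K))ᵐᵒᵖ :=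
  RingQuot.liftAlgHom K ⟨rho0 K n, by
    rintro x y ⟨hx, rfl⟩
    rw [rho0_rel K n x hx, map_zero]⟩

theorem rho_pi (x : FA K n) : rho K n (πB K n x) = rho0 K n x := by
  simp [rho, πB]

/-! relations in `B` -/
theorem pi_rel (x : FA K n) (hx : x ∈ rels K n) : πB K n x = 0 := by
  have : πB K n x = πB K n 0 := RingQuot.mkAlgHom_rel K (show BRel K n x 0 from ⟨hx, rfl⟩)
  rw [this, map_zero]

theorem aB_out (i : ℤ) (h : ¬ (0 ≤ i ∧ i ≤ (n:ℤ))) : aB K n i = 0 := by simp only [aB, ga, dif_neg h, map_zero]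
theorem bB_out (i : ℤ) (h : ¬ (0 ≤ i ∧ i ≤ (n:ℤ))) : bB K n i = 0 := by simp only [bB, gb, dif_neg h, map_zero]
theorem cB_out (i : ℤ) (h : ¬ (0 ≤ i ∧ i ≤ (n:ℤ))) : cB K n i = 0 := by simp only [cB, gc, dif_neg h, map_zero]

theorem Bcc (j k : ℤ) (hk : k = j + 1) : cB K n j * cB K n k = 0 := by
  subst hk
  by_cases h : 0 ≤ j ∧ j < n
  · obtain ⟨i, rfl⟩ := Int.eq_ofNat_of_zero_le h.1
    have := pi_rel K n (gc K n i * gc K n (i+1)) (Or.inr (Or.inr ⟨i, by omega, by simp⟩))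
    simpa [cB] using this
  · by_cases h0 : 0 ≤ j
    · rw [cB_out K n (j+1) (by omega), mul_zero]
    · rw [cB_out K n j (by omega), zero_mul]

theorem Bba (j k : ℤ) (hk : k = j + 1) : bB K n k * aB K n j = 0 := by
  subst hk
  by_cases h : 0 ≤ j ∧ j < n
  · obtain ⟨i, rfl⟩ := Int.eq_ofNat_of_zero_le h.1
    have := pi_rel K n (gb K n (i+1) * ga K n i) (Or.inr (Or.inr ⟨i, by omega, by simp⟩))
    simpa [aB, bB] using this
  · by_cases h0 : 0 ≤ j
    · rw [bB_out K n (j+1) (by omega), zero_mul]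
    · rw [aB_out K n j (by omega), mul_zero]

theorem Bca0 : cB K n 0 * aB K n 0 = 0 := by
  have := pi_rel K n (gc K n 0 * ga K n 0) (Or.inr (Or.inl rfl))
  simpa [aB, cB] using this

theorem Babcn : aB K n n * bB K n n * cB K n n = 0 := by
  have := pi_rel K n (ga K n n * gb K n n * gc K n n) (Or.inl rfl)
  simpa [aB, bB, cB] using this

theorem Bmain (j k : ℤ) (hk : k = j + 1) : cB K n k * aB K n k * bB K n k =
    - (aB K n j * bB K n j * cB K n j) := by
  subst hk
  rw [eq_neg_iff_add_eq_zero, add_comm]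
  by_cases h : 0 ≤ j ∧ j < n
  · obtain ⟨i, rfl⟩ := Int.eq_ofNat_of_zero_le h.1
    have := pi_rel K n (ga K n i * gb K n i * gc K n i + gc K n (i+1) * ga K n (i+1) * gb K n (i+1)) (Or.inr (Or.inr ⟨i, by omega, by simp⟩))
    simpa [aB, bB, cB] using this
  · by_cases h0 : 0 ≤ j
    · rw [cB_out K n (j+1) (by omega)]
      by_cases h1 : j = n
      · subst h1; simp [Babcn]
      · rw [cB_out K n j (by omega)]; simp
    · rw [cB_out K n j (by omega)]
      by_cases h1 : j = -1
      · subst h1; simp [Bca0]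
      · rw [cB_out K n (j+1) (by omega)]; simp

theorem Bbca (j : ℤ) : bB K n j * cB K n j * aB K n j = 0 := by
  by_cases h : 0 ≤ j ∧ j ≤ n
  · obtain ⟨i, rfl⟩ := Int.eq_ofNat_of_zero_le h.1
    rcases i with _ | i
    · rw [mul_assoc]; simp [Bca0]
    have := pi_rel K n (gb K n (i+1) * gc K n (i+1) * ga K n (i+1)) (Or.inr (Or.inr ⟨i, by omega, by simp⟩))
    simpa [aB, bB, cB] using this
  · rw [aB_out K n j h, mul_zero]

noncomputable def lB : Lt → B K n
  | a i => aB K n i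
  | b i => bB K n i
  | c i => cB K n i

noncomputable def pr : List Lt → B K n
  | [] => 1
  | x :: w => pr w * lB K n x

open Classical in
noncomputable def phi : NN K →ₗ[K] B K n :=
  Finsupp.lsum K (fun w => LinearMap.toSpanSingleton K (B K n) (if Nor n w then pr K n w else 0))

open Classical in
theorem phi_single (w : List Lt) (r : K) :
    phi K n (Finsupp.single w r) = r • (if Nor n w then pr K n w else 0) := by
  simp [phi]

def idx : Lt → ℕ
  | a i => i
  | b i => i
  | c i => i

theorem Nor_rule (i : ℕ) (hi : i < n) (w : List Lt) (hw : Nor n (a (i+1) :: c (i+1) :: w)) :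
    Nor n (c i :: b i :: a i :: w) := by
  simp only [Nor] at hw ⊢
  obtain ⟨h1, h2, h3⟩ := hw
  refine ⟨?_, ?_, ?_, h3⟩
  · simp [bad]; omega
  · rcases w with _ | ⟨_ | _ | _, w⟩ <;> simp [bad] at * <;> omega
  · rcases w with _ | ⟨_ | _ | _, _ | ⟨_ | _ | _, w⟩⟩ <;> simp [bad] at * <;> omega

theorem phi_act (x : Lt) (hx : idx x ≤ n) (w : List Lt) :
    phi K n (act K n x w) = (phi K n (Finsupp.single w 1)) * lB K n x := by
  rw [phi_single]
  by_cases hw : Nor n w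
  swap
  · simp [act, hw]
  by_cases hb : bad n (x :: w)
  swap
  · simp [act, hw, hb, phi_single, Nor, pr]
  simp only [hw, if_true, one_smul]
  have hcc := Bcc K n
  have hba := Bba K n
  have hca := Bca0 K n
  have hbca := Bbca K n
  have habcn := Babcn K n
  rcases x with i | i | i
  · have : act K n (a i) w = 0 := by simp [act, hb]
    rw [this, map_zero]
    rcases w with _ | ⟨j | j | j, _ | ⟨k | k | k, w⟩⟩ <;> simp [bad] at hb
    all_goals simp only [pr, lB]
    all_goals first
      | (subst hb; rw [mul_assoc, hba _ _ (by push_cast; ring), mul_zero])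
      | (rcases hb with ⟨rfl, rfl⟩ | ⟨rfl, rfl⟩
         · simp [mul_assoc, hca]
         · rw [mul_assoc, mul_assoc, ← mul_assoc (bB K n _), hbca, mul_zero])
      | (obtain ⟨rfl, rfl⟩ := hb; simp [mul_assoc, hca])
  · rcases w with _ | ⟨j | j | j, _ | ⟨k | k | k, w⟩⟩ <;> simp [bad] at hb
    obtain ⟨rfl, rfl⟩ := hb
    rcases i with _ | i
    · simp [act, bad, pr, lB, mul_assoc, ← mul_assoc (cB K n _), hca]
    · have h1 := Nor_rule n i (by simpa [idx] using hx) w hw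
      simp [act, hw, bad, pr, lB, phi_single, h1]
      have h2 := Bmain K n i (i+1) rfl
      simp only [mul_assoc] at h2 ⊢
      rw [h2]
      exact (mul_neg (pr K n w) (aB K n i * (bB K n i * cB K n i))).symm
  · have : act K n (c i) w = 0 := by simp [act, hb]
    rw [this, map_zero]
    rcases w with _ | ⟨j | j | j, _ | ⟨k | k | k, w⟩⟩ <;> simp [bad] at hb
    all_goals simp only [pr, lB]
    all_goals first
      | (subst hb; rw [mul_assoc, hcc _ _ (by push_cast; ring), mul_zero])
      | (obtain ⟨rfl, rfl, rfl⟩ := hb; rw [mul_assoc, mul_assoc, ← mul_assoc (aB K _ _), habcn, mul_zero])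

theorem phi_Act (x : Lt) (hx : idx x ≤ n) (f : NN K) :
    phi K n (Act K n x f) = phi K n f * lB K n x := by
  induction f using Finsupp.induction_linear with
  | zero => simp
  | add f g hf hg => simp [hf, hg, add_mul]
  | single w r =>
    rw [Act_single, map_smul, phi_act K n x hx, ← smul_mul_assoc, ← map_smul]
    simp

theorem phi_rho (y : B K n) (f : NN K) :
    phi K n ((rho K n y).unop f) = phi K n f * y := by
  obtain ⟨x, rfl⟩ := RingQuot.mkAlgHom_surjective K (BRel K n) y
  change phi K n ((rho K n (πB K n x)).unop f) = phi K n f * πB K n x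
  rw [rho_pi]
  induction x using FreeAlgebra.induction generalizing f with
  | grade0 r => simp [Algebra.algebraMap_eq_smul_one]
  | grade1 g =>
    rcases g with i | i | i
    · have h1 := ga_nat K n i.val (by omega)
      have h2 := phi_Act K n (a i.val) (by simp [idx]; omega) f
      have h3 := rho0_a K n i.val (by omega)
      rw [← h1, h3]; exact h2
    · have h1 := gb_nat K n i.val (by omega)
      have h2 := phi_Act K n (b i.val) (by simp [idx]; omega) f
      have h3 := rho0_b K n i.val (by omega)
      rw [← h1, h3]; exact h2
    · have h1 := gc_nat K n i.val (by omega)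
      have h2 := phi_Act K n (c i.val) (by simp [idx]; omega) f
      have h3 := rho0_c K n i.val (by omega)
      rw [← h1, h3]; exact h2
  | mul x y hx hy => simp [hx, hy, mul_assoc]
  | add x y hx hy => simp [hx, hy, mul_add]

noncomputable def psi (y : B K n) : NN K := (rho K n y).unop (Finsupp.single [] 1)

theorem phi_psi (y : B K n) : phi K n (psi K n y) = y := by
  rw [psi, phi_rho, phi_single]; simp [Nor, pr]

theorem psi_add (x y : B K n) : psi K n (x + y) = psi K n x + psi K n y := by simp [psi]
theorem psi_zero : psi K n 0 = 0 := by simp [psi]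

theorem psi_mul (x : Lt) (hx : idx x ≤ n) (y : B K n) :
    psi K n (y * lB K n x) = Act K n x (psi K n y) := by
  have : rho K n (lB K n x) = MulOpposite.op (Act K n x) := by
    rcases x with i | i | i <;> simp only [idx] at hx
    · exact (rho_pi K n _).trans (rho0_a K n i hx)
    · exact (rho_pi K n _).trans (rho0_b K n i hx)
    · exact (rho_pi K n _).trans (rho0_c K n i hx)
  simp [psi, this]

theorem coeff_same (x : Lt) (w : List Lt) (hw : Nor n (x :: w)) (f : NN K) :
    Act K n x f (x :: w) = f w := by
  induction f using Finsupp.induction_linear with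
  | zero => simp
  | add f g hf hg => simp [hf, hg]
  | single v r =>
    rw [Act_single]
    unfold act
    split_ifs with h1 h2
    · have : v ≠ w := by rintro rfl; exact hw.1 h2
      rw [Finsupp.single_eq_of_ne this.symm]
      split
      · split_ifs <;> simp
      · simp
    · by_cases h : v = w
      · subst h; simp
      · have h' : w ≠ v := fun e => h e.symm
        rw [Finsupp.single_eq_of_ne h']; simp [h]
    · have : v ≠ w := by rintro rfl; exact h1 hw.2
      rw [Finsupp.single_eq_of_ne this.symm]; simp

theorem coeff_bc (i j : ℕ) (w : List Lt) (f : NN K) :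
    Act K n (c i) f (b j :: w) = 0 := by
  induction f using Finsupp.induction_linear with
  | zero => simp
  | add f g hf hg => simp [hf, hg]
  | single v r =>
    rw [Act_single]
    unfold act
    split_ifs with h1 h2 <;> simp

theorem phi_mem (I : AddSubmonoid (B K n)) (f : NN K)
    (h : ∀ w, Nor n w → f w ≠ 0 → f w • pr K n w ∈ I) : phi K n f ∈ I := by
  rw [phi, Finsupp.lsum_apply, Finsupp.sum]
  refine I.sum_mem fun w hw => ?_
  simp only [LinearMap.toSpanSingleton_apply]
  split_ifs with hn
  · exact h w hn (Finsupp.mem_support_iff.1 hw)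
  · simp

theorem L2 (j : ℕ) (hj : j < n) (x : B K n) (hx : x * cB K n j = 0) :
    ∃ z, x = z * cB K n ((j:ℤ) - 1) := by
  have h1 : Act K n (c j) (psi K n x) = 0 := by
    rw [← psi_mul K n (c j) (by simp [idx]; omega)]
    simp only [lB]; rw [hx, psi_zero]
  have h2 := phi_mem K n ((Ideal.span {cB K n ((j:ℤ) - 1)}).toAddSubmonoid) (psi K n x) ?_
  · rw [phi_psi] at h2
    obtain ⟨z, hz⟩ := Ideal.mem_span_singleton'.1 h2
    exact ⟨z, hz.symm⟩
  · intro w hw hne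
    by_cases hb : bad n (c j :: w)
    · rcases w with _ | ⟨k | k | k, _ | ⟨l | l | l, w⟩⟩ <;> simp [bad] at hb
      any_goals omega
      all_goals
        subst hb
        rw [pr, ← smul_mul_assoc]
        simp only [lB]; push_cast; rw [add_sub_cancel_right]
        exact Ideal.mem_span_singleton'.2 ⟨_, rfl⟩
    · exfalso; apply hne
      rw [← coeff_same K n (c j) w ⟨hb, hw⟩, h1]; simp

theorem L1a (i : ℕ) (hi : i < n) (w x : B K n)
    (hx : w * bB K n (i+1) + x * cB K n i = 0) :
    ∃ z, w = z * (cB K n (i+1) * aB K n (i+1)) := by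
  have h1 : Act K n (b (i+1)) (psi K n w) + Act K n (c i) (psi K n x) = 0 := by
    rw [← psi_mul K n (c i) (by simp [idx]; omega), ← psi_mul K n (b (i+1)) (by simp [idx]; omega),
      ← psi_add]
    simp only [lB]; push_cast; rw [hx, psi_zero]
  have h2 := phi_mem K n ((Ideal.span {cB K n (i+1) * aB K n (i+1)}).toAddSubmonoid) (psi K n w) ?_
  · rw [phi_psi] at h2
    obtain ⟨z, hz⟩ := Ideal.mem_span_singleton'.1 h2
    exact ⟨z, hz.symm⟩
  · intro w' hw hne
    by_cases hb : bad n (b (i+1) :: w')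
    · rcases w' with _ | ⟨k | k | k, _ | ⟨l | l | l, w'⟩⟩ <;> simp [bad] at hb
      obtain ⟨rfl, rfl⟩ := hb
      rw [pr, pr]
      refine Ideal.mem_span_singleton'.2 ⟨psi K n w (a (i+1) :: c (i+1) :: w') • pr K n w', ?_⟩
      simp only [lB]; push_cast
      simp [mul_assoc]
    · exfalso; apply hne
      have := DFunLike.congr_fun h1 (b (i+1) :: w')
      rw [Finsupp.add_apply, coeff_bc, coeff_same K n (b (i+1)) w' ⟨hb, hw⟩] at this
      simpa using this

theorem L3 (i : ℕ) (hi : i < n) (w : B K n)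
    (hx : w * (cB K n (i+1) * aB K n (i+1)) = 0) :
    ∃ u y, w = u * bB K n (i+1) + y * cB K n i := by
  have h1 : Act K n (a (i+1)) (Act K n (c (i+1)) (psi K n w)) = 0 := by
    rw [← psi_mul K n (c (i+1)) (by simp [idx]; omega), ← psi_mul K n (a (i+1)) (by simp [idx]; omega)]
    simp only [lB]; push_cast; rw [mul_assoc, hx, psi_zero]
  have h2 := phi_mem K n ((Ideal.span {bB K n (i+1), cB K n i}).toAddSubmonoid) (psi K n w) ?_
  · rw [phi_psi] at h2
    obtain ⟨z, y, hz⟩ := Ideal.mem_span_pair.1 h2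
    exact ⟨z, y, hz.symm⟩
  · intro w' hw hne
    by_cases hb : (∃ v, w' = b (i+1) :: v) ∨ (∃ v, w' = c i :: v)
    · rcases hb with ⟨v, rfl⟩ | ⟨v, rfl⟩
      · rw [pr]
        refine Ideal.mem_span_pair.2 ⟨psi K n w (b (i+1) :: v) • pr K n v, 0, ?_⟩
        simp [lB]
      · rw [pr]
        refine Ideal.mem_span_pair.2 ⟨0, psi K n w (c i :: v) • pr K n v, ?_⟩
        simp [lB]
    · exfalso; apply hne
      push Not at hb
      have g1 : ¬ bad n (c (i+1) :: w') := by
        rcases w' with _ | ⟨_ | _ | _, _ | ⟨_ | _ | _, w⟩⟩ <;> simp [bad] at * <;> omega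
      have g2 : ¬ bad n (a (i+1) :: c (i+1) :: w') := by
        rcases w' with _ | ⟨_ | _ | _, _ | ⟨_ | _ | _, w⟩⟩ <;> simp [bad] at * <;> omega
      have := DFunLike.congr_fun h1 (a (i+1) :: c (i+1) :: w')
      rw [coeff_same K n _ _ ⟨g2, g1, hw⟩, coeff_same K n _ _ ⟨g1, hw⟩] at this
      simpa using this

/-! sequences -/

noncomputable def FT (i : ℕ) (V : ℕ → B K n) (m : ℕ) : B K n :=
  V m * (if m = 0 then bB K n i else aB K n ((i:ℤ) - 2 * m) * bB K n ((i:ℤ) - 2 * m)) +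
    V (m+1) * cB K n ((i:ℤ) - 2 * m - 1)

noncomputable def FS (i : ℕ) (V : ℕ → B K n) : ℕ → B K n
  | 0 => V 0 * (cB K n i * aB K n i)
  | m+1 => V m * (aB K n ((i:ℤ) - 1 - 2 * m) * bB K n ((i:ℤ) - 1 - 2 * m)) +
    V (m+1) * cB K n ((i:ℤ) - 2 - 2 * m)

theorem Bcc' (x : B K n) (j k : ℤ) (hk : k = j + 1) : x * cB K n j * cB K n k = 0 := by
  rw [mul_assoc, Bcc K n j k hk, mul_zero]

theorem Bab (x : B K n) (j k : ℤ) (hk : k = j + 1) :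
    x * (aB K n k * bB K n k) * (aB K n j * bB K n j) = 0 := by
  have := Bba K n j k hk
  rw [mul_assoc, mul_assoc (aB K n k), ← mul_assoc (bB K n k), this]; simp

theorem Bcab (x : B K n) (j k : ℤ) (hk : k = j + 1) :
    x * cB K n k * (aB K n k * bB K n k) + x * (aB K n j * bB K n j) * cB K n j = 0 := by
  have := Bmain K n j k hk
  rw [mul_assoc, ← mul_assoc (cB K n k), this, mul_assoc x, ← mul_add, neg_add_cancel, mul_zero]

theorem Bcab' (x : B K n) (j k : ℤ) (hk : k = j + 1) :
    x * (cB K n k * aB K n k) * bB K n k + x * (aB K n j * bB K n j) * cB K n j = 0 := by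
  rw [← Bcab K n x j k hk]; simp only [mul_assoc]

theorem L2z (j : ℤ) (h0 : 0 ≤ j) (hj : j < n) (x : B K n) (hx : x * cB K n j = 0) :
    ∃ z, x = z * cB K n (j - 1) := by
  obtain ⟨i, rfl⟩ := Int.eq_ofNat_of_zero_le h0
  exact L2 K n i (by omega) x hx

theorem chainT (i : ℕ) (hi : 1 ≤ i) (hin : i ≤ n) (V : ℕ → B K n) (m : ℕ) (hm : 2 * m + 1 ≤ i)
    (h : ∀ c ≤ m, FT K n i V c = 0) : ∃ U, ∀ c ≤ m + 1, V c = FS K n i U c := by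
  induction m with
  | zero =>
    have h0 := h 0 le_rfl
    obtain ⟨i, rfl⟩ : ∃ k, i = k + 1 := ⟨i - 1, by omega⟩
    simp only [FT, if_true] at h0
    push_cast at h0
    have e1 : (i:ℤ) + 1 - 0 - 1 = i := by ring
    rw [e1] at h0
    obtain ⟨z, hz⟩ := L1a K n i (by omega) _ _ h0
    rw [hz] at h0
    have h2 := Bcab' K n z i (i+1) rfl
    obtain ⟨y, hy⟩ := L2z K n i (by omega) (by omega) (V (0+1) - z * (aB K n i * bB K n i)) (by
      rw [sub_mul, sub_eq_zero]
      exact add_left_cancel (h0.trans h2.symm))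
    refine ⟨fun t => if t = 0 then z else y, ?_⟩
    intro c hc
    have : c = 0 ∨ c = 1 := by omega
    rcases this with rfl | rfl
    · simp [FS, hz]
    · rw [sub_eq_iff_eq_add] at hy
      simp only [zero_add] at hy
      rw [hy]
      simp only [FS]
      push_cast
      rw [show (i:ℤ) + 1 - 1 - 0 = i by ring, show (i:ℤ) + 1 - 2 - 0 = i - 1 by ring]
      simp [add_comm]
  | succ m ih =>
    obtain ⟨U, hU⟩ := ih (by omega) (fun c hc => h c (by omega))
    have h0 := h (m+1) le_rfl
    have h1 := hU (m+1) le_rfl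
    simp only [FT, FS] at h0 h1
    rw [if_neg (by omega)] at h0
    push_cast at h0
    rw [h1, add_mul, show (i:ℤ) - 2 * (m+1) = i - 2 - 2 * m by ring, Bab K n _ _ _ (by ring), zero_add] at h0
    have h2 := Bcab K n (U (m+1)) (i - 2 - 2 * m - 1) (i - 2 - 2 * m) (by ring)
    obtain ⟨y, hy⟩ := L2z K n (i - 2 - 2 * m - 1) (by omega) (by omega) (V (m + 1 + 1) - U (m+1) * (aB K n (i - 2 - 2 * m - 1) * bB K n (i - 2 - 2 * m - 1))) (by
      rw [sub_mul, sub_eq_zero]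
      exact add_left_cancel (h0.trans h2.symm))
    refine ⟨Function.update U (m+1+1) y, ?_⟩
    intro c hc
    by_cases hc' : c = m + 1 + 1
    · subst hc'
      rw [sub_eq_iff_eq_add] at hy
      rw [hy]
      simp only [FS]
      push_cast
      rw [show (i:ℤ) - 1 - 2 * (m+1) = i - 2 - 2 * m - 1 by ring, show (i:ℤ) - 2 - 2 * (m+1) = i - 2 - 2 * m - 1 - 1 by ring,
        Function.update_self, Function.update_of_ne (by omega), add_comm]
    · rw [hU c (by omega)]
      rcases c with _ | c
      · simp [FS]
      · simp only [FS]
        rw [Function.update_of_ne (by omega), Function.update_of_ne (by omega)]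

theorem chainS (i : ℕ) (hi : 1 ≤ i) (hin : i ≤ n) (V : ℕ → B K n) (m : ℕ) (hm : 2 * m ≤ i)
    (h : ∀ c ≤ m, FS K n i V c = 0) : ∃ U, ∀ c ≤ m, V c = FT K n i U c := by
  induction m with
  | zero =>
    have h0 := h 0 le_rfl
    obtain ⟨i, rfl⟩ : ∃ k, i = k + 1 := ⟨i - 1, by omega⟩
    simp only [FS] at h0
    push_cast at h0
    obtain ⟨u, y, hz⟩ := L3 K n i (by omega) _ h0
    refine ⟨fun t => if t = 0 then u else y, ?_⟩
    intro c hc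
    have : c = 0 := by omega
    subst this
    simp [FT, hz]
  | succ m ih =>
    obtain ⟨U, hU⟩ := ih (by omega) (fun c hc => h c (by omega))
    have h0 := h (m+1) le_rfl
    have h1 := hU m le_rfl
    simp only [FT, FS] at h0 h1
    have h3 : V m * (aB K n ((i:ℤ) - 1 - 2 * m) * bB K n ((i:ℤ) - 1 - 2 * m)) =
        U (m+1) * cB K n ((i:ℤ) - 1 - 2 * m) * (aB K n ((i:ℤ) - 1 - 2 * m) * bB K n ((i:ℤ) - 1 - 2 * m)) := by
      rw [h1, add_mul, show (i:ℤ) - 2 * m - 1 = i - 1 - 2 * m by ring]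
      convert zero_add _
      split_ifs with hm0
      · subst hm0
        have := Bba K n ((i:ℤ) - 1 - 2 * (0:ℕ)) i (by push_cast; ring)
        rw [mul_assoc, ← mul_assoc (bB K n i), this]; simp
      · exact Bab K n _ _ _ (by ring)
    rw [h3] at h0
    have h2 := Bcab K n (U (m+1)) (i - 2 - 2 * m) (i - 1 - 2 * m) (by ring)
    obtain ⟨y, hy⟩ := L2z K n (i - 2 - 2 * m) (by omega) (by omega) (V (m + 1) - U (m+1) * (aB K n (i - 2 - 2 * m) * bB K n (i - 2 - 2 * m))) (by
      rw [sub_mul, sub_eq_zero]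
      exact add_left_cancel (h0.trans h2.symm))
    refine ⟨Function.update U (m+1+1) y, ?_⟩
    intro c hc
    by_cases hc' : c = m + 1
    · subst hc'
      rw [sub_eq_iff_eq_add] at hy
      rw [hy]
      simp only [FT]
      push_cast
      rw [show (i:ℤ) - 2 * (m+1) = i - 2 - 2 * m by ring,
        Function.update_self, Function.update_of_ne (by omega), add_comm]
    · rw [hU c (by omega)]
      simp only [FT]
      rw [Function.update_of_ne (by omega), Function.update_of_ne (by omega)]

theorem FTFS (i : ℕ) (U : ℕ → B K n) (c : ℕ) : FT K n i (FS K n i U) c = 0 := by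
  rcases c with _ | c
  · simp only [FT, FS, if_true, add_mul]
    rw [show (i:ℤ) - 2 * (0:ℕ) - 1 = i - 1 by push_cast; ring, show (i:ℤ) - 1 - 2 * (0:ℕ) = i - 1 by push_cast; ring,
      ← add_assoc, Bcab' K n _ _ _ (by ring), Bcc' K n _ _ _ (by push_cast; ring), add_zero]
  · simp only [FT, FS, add_mul]
    rw [if_neg (Nat.succ_ne_zero c), show (i:ℤ) - 2 * (c+1:ℕ) - 1 = i - 2 - 2 * c - 1 by push_cast; ring,
      show (i:ℤ) - 2 * (c+1:ℕ) = i - 2 - 2 * c by push_cast; ring,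
      show (i:ℤ) - 1 - 2 * (c+1:ℕ) = i - 2 - 2 * c - 1 by push_cast; ring,
      Bab K n _ _ _ (by ring), zero_add, ← add_assoc, Bcab K n _ _ _ (by ring),
      Bcc' K n _ _ _ (by push_cast; ring), add_zero]

theorem FSFT (i : ℕ) (U : ℕ → B K n) (c : ℕ) : FS K n i (FT K n i U) c = 0 := by
  rcases c with _ | c
  · simp only [FS, FT, if_true, add_mul]
    have h1 := Bbca K n i
    have h2 := Bcc K n ((i:ℤ) - 2 * (0:ℕ) - 1) i (by push_cast; ring)
    rw [mul_assoc, ← mul_assoc (bB K n i), h1, ← mul_assoc, mul_assoc (U (0+1)), h2]; simp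
  · simp only [FT, FS, add_mul]
    rw [if_neg (Nat.succ_ne_zero c), show (i:ℤ) - 2 * (c+1:ℕ) - 1 = i - 2 - 2 * c - 1 by push_cast; ring,
      show (i:ℤ) - 2 * (c+1:ℕ) = i - 2 - 2 * c by push_cast; ring,
      show (i:ℤ) - 2 * c - 1 = i - 1 - 2 * c by push_cast; ring,
      Bcc' K n _ _ _ (by push_cast; ring), add_zero, add_assoc, Bcab K n _ _ _ (by ring), add_zero]
    split_ifs with hm0
    · subst hm0
      have := Bba K n ((i:ℤ) - 1 - 2 * (0:ℕ)) i (by push_cast; ring)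
      rw [mul_assoc, ← mul_assoc (bB K n i), this]; simp
    · exact Bab K n _ _ _ (by ring)

theorem FT_congr (i : ℕ) (U V : ℕ → B K n) (c : ℕ) (h0 : U c = V c)
    (h1 : 2 * c + 1 ≤ i → U (c+1) = V (c+1)) : FT K n i U c = FT K n i V c := by
  by_cases h : 2 * c + 1 ≤ i
  · simp only [FT, h0, h1 h]
  · simp only [FT, h0]
    rw [cB_out K n _ (by omega)]; simp

theorem FS_congr (i : ℕ) (U V : ℕ → B K n) (c : ℕ) (h0 : ∀ d < c, U d = V d)
    (h1 : 2 * c ≤ i → U c = V c) : FS K n i U c = FS K n i V c := by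
  rcases c with _ | c
  · simp only [FS, h1 (by omega)]
  · simp only [FS, h0 c (by omega)]
    by_cases h : 2 * (c + 1) ≤ i
    · rw [h1 h]
    · rw [cB_out K n _ (by omega)]; simp

/-- exactness at a `T` -/
theorem exT (i : ℕ) (hi : 1 ≤ i) (hin : i ≤ n) (V : ℕ → B K n) (k r : ℕ)
    (hk : 2 * k ≤ i) (hr : r = if i = 2 * k then k + 1 else k + 2) :
    (∀ c < k + 1, FT K n i V c = 0) ↔ ∃ U, ∀ c < r, V c = FS K n i U c := by
  constructor
  · intro h
    by_cases e : i = 2 * k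
    · rw [if_pos e] at hr
      obtain ⟨U, hU⟩ := chainT K n i hi hin V (k-1) (by omega) (fun c hc => h c (by omega))
      exact ⟨U, fun c hc => hU c (by omega)⟩
    · rw [if_neg e] at hr
      obtain ⟨U, hU⟩ := chainT K n i hi hin V k (by omega) (fun c hc => h c (by omega))
      exact ⟨U, fun c hc => hU c (by omega)⟩
  · rintro ⟨U, hU⟩ c hc
    rw [← FTFS K n i U c]
    apply FT_congr
    · apply hU; split_ifs at hr <;> omega
    · intro h; apply hU; split_ifs at hr <;> omega

theorem exS (i : ℕ) (hi : 1 ≤ i) (hin : i ≤ n) (V : ℕ → B K n) (k r : ℕ)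
    (hk : 2 * k ≤ i + 1) (hk1 : 1 ≤ k) (hr : r = if i + 1 = 2 * k then k else k + 1) :
    (∀ c < k + 1, FS K n i V c = 0) ↔ ∃ U, ∀ c < r, V c = FT K n i U c := by
  constructor
  · intro h
    by_cases e : i + 1 = 2 * k
    · rw [if_pos e] at hr
      obtain ⟨U, hU⟩ := chainS K n i hi hin V (k-1) (by omega) (fun c hc => h c (by omega))
      exact ⟨U, fun c hc => hU c (by omega)⟩
    · rw [if_neg e] at hr
      obtain ⟨U, hU⟩ := chainS K n i hi hin V k (by omega) (fun c hc => h c (by omega))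
      exact ⟨U, fun c hc => hU c (by omega)⟩
  · rintro ⟨U, hU⟩ c hc
    rw [← FSFT K n i U c]
    apply FS_congr
    · intro d hd; apply hU; split_ifs at hr <;> omega
    · intro h; apply hU; split_ifs at hr <;> omega

/-! matrices -/

section mat
variable {R : Type} [Semiring R]

/-- entries extended by zero -/
def ent (P : MatB R) (r c : ℕ) : R :=
  if h : r < P.rows ∧ c < P.cols then P.M ⟨r, h.1⟩ ⟨c, h.2⟩ else 0

theorem ent_star (P Q : MatB R) (hP : 1 ≤ P.rows) (hQ : 1 ≤ Q.rows) (r c : ℕ) (hc : P.cols ≤ c) :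
    ent (P.star Q) r c = if P.rows - 1 ≤ r then ent Q (r - (P.rows - 1)) (c - P.cols) else 0 := by
  unfold ent
  by_cases h1 : P.rows - 1 ≤ r
  · rw [if_pos h1]
    by_cases h : r < (P.star Q).rows ∧ c < (P.star Q).cols
    · rw [dif_pos h]
      have h2 := h
      simp only [MatB.star] at h2
      rw [dif_pos ⟨by omega, by omega⟩]
      simp only [MatB.star, starM, Matrix.of_apply]
      rw [dif_neg (by omega), dif_pos ⟨h1, hc⟩]
    · rw [dif_neg h, dif_neg]
      simp only [MatB.star] at h
      omega
  · rw [if_neg h1]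
    split_ifs with h
    · simp only [MatB.star, starM, Matrix.of_apply]
      rw [dif_neg (by omega), dif_neg (by omega)]
    · rfl

theorem ent_star_left (P Q : MatB R) (hQ : 1 ≤ Q.rows) (r c : ℕ) (hc : c < P.cols) :
    ent (P.star Q) r c = ent P r c := by
  unfold ent
  by_cases h : r < P.rows
  · have h2 : r < (P.star Q).rows ∧ c < (P.star Q).cols := by
      simp only [MatB.star]; omega
    rw [dif_pos h2, dif_pos ⟨h, hc⟩]
    simp only [MatB.star, starM, Matrix.of_apply]
    rw [dif_pos ⟨h, hc⟩]
  · rw [dif_neg (show ¬ (r < P.rows ∧ c < P.cols) by omega)]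
    split_ifs with h2
    · simp only [MatB.star, starM, Matrix.of_apply]
      rw [dif_neg (by omega), dif_neg (by omega)]
    · rfl

theorem vecMul_ent (P : MatB R) (U : ℕ → R) (c : Fin P.cols) :
    Matrix.vecMul (fun r : Fin P.rows => U r.val) P.M c =
      ∑ r ∈ Finset.range P.rows, U r * ent P r c.val := by
  rw [← Fin.sum_univ_eq_sum_range (fun r => U r * ent P r c.val)]
  simp [Matrix.vecMul, dotProduct, ent]

theorem vecMul_ent' (P : MatB R) (U : ℕ → R) (c : Fin P.cols) (N : ℕ) (hN : P.rows ≤ N) :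
    Matrix.vecMul (fun r : Fin P.rows => U r.val) P.M c =
      ∑ r ∈ Finset.range N, U r * ent P r c.val := by
  rw [vecMul_ent]
  apply Finset.sum_subset
  · intro x; simp; omega
  · intro x _ hx
    simp at hx
    rw [ent, dif_neg (by omega), mul_zero]

/-- extension by zero -/
def ext0 {m : ℕ} (u : Fin m → R) (r : ℕ) : R := if h : r < m then u ⟨r, h⟩ else 0

theorem ext0_val {m : ℕ} (u : Fin m → R) : (fun r : Fin m => ext0 u r.val) = u := by
  funext r; simp [ext0]

theorem ker_iff (P : MatB R) (F : (ℕ → R) → ℕ → R)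
    (hF : ∀ U (c : Fin P.cols), Matrix.vecMul (fun r : Fin P.rows => U r.val) P.M c = F U c.val)
    {m : ℕ} (h : m = P.rows) (v : Fin m → R) :
    Matrix.vecMul (v ∘ Fin.cast h.symm) P.M = 0 ↔ ∀ c < P.cols, F (ext0 v) c = 0 := by
  subst h
  have : v ∘ Fin.cast rfl = fun r : Fin P.rows => ext0 v r.val := by rw [ext0_val]; rfl
  rw [this]
  constructor
  · intro h c hc
    rw [← hF _ ⟨c, hc⟩, h]; rfl
  · intro h
    funext c
    rw [hF]; exact h c c.2

theorem im_iff (P : MatB R) (F : (ℕ → R) → ℕ → R)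
    (hF : ∀ U (c : Fin P.cols), Matrix.vecMul (fun r : Fin P.rows => U r.val) P.M c = F U c.val)
    (v : Fin P.cols → R) :
    (∃ w, v = Matrix.vecMul w P.M) ↔ ∃ U, ∀ c < P.cols, ext0 v c = F U c := by
  constructor
  · rintro ⟨w, rfl⟩
    refine ⟨ext0 w, fun c hc => ?_⟩
    rw [← hF _ ⟨c, hc⟩, ext0_val, ext0, dif_pos hc]
  · rintro ⟨U, hU⟩
    refine ⟨fun r => U r.val, ?_⟩
    funext c
    rw [hF, ← hU c c.2, ext0, dif_pos c.2]

end mat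

noncomputable def TF (i k : ℕ) : MatB (B K n) :=
  (((List.range k).map fun t : ℕ => (i : ℤ) - 2 * (t + 1))).foldl
    (starGamma K n) ⟨2, 1, !![bB K n i; cB K n ((i : ℤ) - 1)]⟩

noncomputable def SF (i k : ℕ) : MatB (B K n) :=
  (((List.range k).map fun t : ℕ => (i : ℤ) - 1 - 2 * t)).foldl
    (starGamma K n) ⟨1, 1, !![cB K n i * aB K n i]⟩

theorem TF_succ (i k : ℕ) : TF K n i (k+1) = starGamma K n (TF K n i k) ((i:ℤ) - 2 * (k+1)) := by
  simp [TF, List.range_succ]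

theorem SF_succ (i k : ℕ) : SF K n i (k+1) = starGamma K n (SF K n i k) ((i:ℤ) - 1 - 2 * k) := by
  simp [SF, List.range_succ]

theorem Gam_rows (j : ℤ) : (GammaMat K n j).rows = if j = 0 then 1 else 2 := by
  unfold GammaMat; split_ifs <;> rfl
theorem Gam_cols (j : ℤ) : (GammaMat K n j).cols = 1 := by
  unfold GammaMat; split_ifs <;> rfl
theorem Gam_ent (j : ℤ) (r : ℕ) : ent (GammaMat K n j) r 0 =
    if r = 0 then aB K n j * bB K n j else if r = 1 then cB K n (j - 1) else 0 := by
  by_cases hj : j = 0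
  · subst hj
    have : cB K n (-1) = 0 := cB_out K n _ (by omega)
    rcases r with _ | _ | r <;> simp [GammaMat, ent, this]
  · have : GammaMat K n j = ⟨2, 1, GammaP K n j⟩ := by simp [GammaMat, hj]
    rw [this]
    rcases r with _ | _ | r <;> simp [ent, GammaP]

theorem TF_spec (i : ℕ) (hi : 1 ≤ i) (k : ℕ) (hk : 2 * k ≤ i) :
    (TF K n i k).cols = k + 1 ∧ (TF K n i k).rows = (if i = 2 * k then k + 1 else k + 2) ∧
    ∀ c < k + 1, ∀ r, ent (TF K n i k) r c =
      if r = c then (if c = 0 then bB K n i else aB K n ((i:ℤ) - 2 * c) * bB K n ((i:ℤ) - 2 * c))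
      else if r = c + 1 then cB K n ((i:ℤ) - 2 * c - 1) else 0 := by
  induction k with
  | zero =>
    refine ⟨rfl, ?_, ?_⟩
    · rw [if_neg (by omega)]; rfl
    · intro c hc r
      obtain rfl : c = 0 := by omega
      have : TF K n i 0 = ⟨2, 1, !![bB K n i; cB K n ((i : ℤ) - 1)]⟩ := rfl
      rw [this]
      rcases r with _ | _ | r <;> simp [ent]
  | succ k ih =>
    obtain ⟨h1, h2, h3⟩ := ih (by omega)
    rw [if_neg (by omega)] at h2
    have hg : TF K n i (k+1) = (TF K n i k).star (GammaMat K n ((i:ℤ) - 2 * (k+1))) := by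
      rw [TF_succ, starGamma, if_neg (by omega)]
    have hgr : 1 ≤ (GammaMat K n ((i:ℤ) - 2 * (k+1))).rows := by rw [Gam_rows]; split_ifs <;> omega
    rw [hg]
    refine ⟨?_, ?_, ?_⟩
    · simp only [MatB.star, Gam_cols, h1]
    · simp only [MatB.star, Gam_rows, h2]
      split_ifs <;> omega
    · intro c hc r
      by_cases hck : c < k + 1
      · rw [ent_star_left _ _ hgr _ _ (by omega), h3 c hck]
      · obtain rfl : c = k + 1 := by omega
        rw [ent_star _ _ (by omega) hgr _ _ (by omega), h1, h2, Nat.sub_self, Gam_ent, if_neg (Nat.succ_ne_zero k)]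
        push_cast
        split_ifs <;> first | rfl | omega

theorem SF_spec (i : ℕ) (hi : 1 ≤ i) (k : ℕ) (hk : 2 * k ≤ i + 1) :
    (SF K n i k).cols = k + 1 ∧ (SF K n i k).rows = (if i + 1 = 2 * k then k else k + 1) ∧
    ∀ c < k + 1, ∀ r, ent (SF K n i k) r c =
      if c = 0 then (if r = 0 then cB K n i * aB K n i else 0)
      else if r + 1 = c then aB K n ((i:ℤ) + 1 - 2 * c) * bB K n ((i:ℤ) + 1 - 2 * c)
      else if r = c then cB K n ((i:ℤ) - 2 * c) else 0 := by
  induction k with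
  | zero =>
    refine ⟨rfl, ?_, ?_⟩
    · rw [if_neg (by omega)]; rfl
    · intro c hc r
      obtain rfl : c = 0 := by omega
      have : SF K n i 0 = ⟨1, 1, !![cB K n i * aB K n i]⟩ := rfl
      rw [this]
      rcases r with _ | r <;> simp [ent]
  | succ k ih =>
    obtain ⟨h1, h2, h3⟩ := ih (by omega)
    rw [if_neg (by omega)] at h2
    have hg : SF K n i (k+1) = (SF K n i k).star (GammaMat K n ((i:ℤ) - 1 - 2 * k)) := by
      rw [SF_succ, starGamma, if_neg (by omega)]
    have hgr : 1 ≤ (GammaMat K n ((i:ℤ) - 1 - 2 * k)).rows := by rw [Gam_rows]; split_ifs <;> omega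
    rw [hg]
    refine ⟨?_, ?_, ?_⟩
    · simp only [MatB.star, Gam_cols, h1]
    · simp only [MatB.star, Gam_rows, h2]
      split_ifs <;> omega
    · intro c hc r
      by_cases hck : c < k + 1
      · rw [ent_star_left _ _ hgr _ _ (by omega), h3 c hck]
      · obtain rfl : c = k + 1 := by omega
        rw [ent_star _ _ (by omega) hgr _ _ (by omega), h1, h2, Nat.sub_self, Gam_ent, if_neg (Nat.succ_ne_zero k),
          show (i:ℤ) + 1 - 2 * (k+1:ℕ) = i - 1 - 2 * k by push_cast; ring,
          show (i:ℤ) - 2 * (k+1:ℕ) = i - 1 - 2 * k - 1 by push_cast; ring]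
        split_ifs <;> first | rfl | omega

theorem TF_mul (i : ℕ) (hi : 1 ≤ i) (k : ℕ) (hk : 2 * k ≤ i) (U : ℕ → B K n)
    (c : Fin (TF K n i k).cols) :
    Matrix.vecMul (fun r : Fin (TF K n i k).rows => U r.val) (TF K n i k).M c = FT K n i U c.val := by
  obtain ⟨h1, h2, h3⟩ := TF_spec K n i hi k hk
  have hc := c.2
  rw [vecMul_ent' _ U c (k + 2) (by split_ifs at h2 <;> omega)]
  rw [Finset.sum_congr rfl (fun r _ => by rw [h3 c.val (by omega) r])]
  generalize hcc : c.val = d at *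
  rw [← Finset.sum_subset (s₁ := {d, d+1})]
  · rw [Finset.sum_pair (by omega)]
    simp [FT]
  · intro x; simp; omega
  · intro x _ hx
    simp at hx
    rw [if_neg hx.1, if_neg hx.2, mul_zero]

theorem SF_mul (i : ℕ) (hi : 1 ≤ i) (k : ℕ) (hk : 2 * k ≤ i + 1) (U : ℕ → B K n)
    (c : Fin (SF K n i k).cols) :
    Matrix.vecMul (fun r : Fin (SF K n i k).rows => U r.val) (SF K n i k).M c = FS K n i U c.val := by
  obtain ⟨h1, h2, h3⟩ := SF_spec K n i hi k hk
  have hc := c.2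
  rw [vecMul_ent' _ U c (k + 2) (by split_ifs at h2 <;> omega)]
  rw [Finset.sum_congr rfl (fun r _ => by rw [h3 c.val (by omega) r])]
  generalize hcc : c.val = d at *
  rcases d with _ | d
  · simp [FS]
  rw [← Finset.sum_subset (s₁ := {d, d+1})]
  · rw [Finset.sum_pair (by omega)]
    simp [FS]
    rw [show (i:ℤ) + 1 - 2 * (d+1) = i - 1 - 2 * d by ring, show (i:ℤ) - 2 * (d+1) = i - 2 - 2 * d by ring]
  · intro x; simp; omega
  · intro x _ hx
    simp at hx
    rw [if_neg (by omega), if_neg (by omega), if_neg (by omega), mul_zero]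

def kS (i j : ℕ) : ℕ := min (j / 2 + 1) ((i + 1) / 2)
def kT (i j : ℕ) : ℕ := min ((j + 1) / 2) (i / 2)

theorem Smat_eq (i p : ℕ) : Smat K n i p = SF K n i ((i - p) / 2 + 1) := by
  unfold Smat SF
  congr 1
  simp [List.map_eq_flatMap, List.flatMap_assoc]

theorem Tmat_eq (i p : ℕ) : Tmat K n i p = TF K n i ((i - p) / 2) := by
  unfold Tmat TF
  congr 1
  simp [List.map_eq_flatMap, List.flatMap_assoc]

theorem DQ_even (i j : ℕ) (hi : 1 ≤ i) (hj : j % 2 = 0) : DQ K n i j = SF K n i (kS i j) := by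
  unfold DQ
  simp only [hj, if_true]
  split_ifs with h
  · have : kS i j = (i - (i - j)) / 2 + 1 := by unfold kS; omega
    rw [this, Smat_eq]
  · have : kS i j = (i - (2 - i % 2)) / 2 + 1 := by unfold kS; omega
    rw [this, Smat_eq]

theorem DQ_odd (i j : ℕ) (hi : 1 ≤ i) (hj : ¬ j % 2 = 0) : DQ K n i j = TF K n i (kT i j) := by
  unfold DQ
  simp only [hj, if_false]
  split_ifs with h
  · have : kT i j = (i - (i - j - 1)) / 2 := by unfold kT; omega
    rw [this, Tmat_eq]
  · have : kT i j = (i - (i % 2)) / 2 := by unfold kT; omega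
    rw [this, Tmat_eq]

theorem rows_cols (i j : ℕ) (hi : 1 ≤ i) : (DQ K n i (j+1)).cols = (DQ K n i j).rows := by
  by_cases hj : j % 2 = 0
  · rw [DQ_even K n i j hi hj, DQ_odd K n i (j+1) hi (by omega),
      (TF_spec K n i hi _ (by unfold kT; omega)).1, (SF_spec K n i hi _ (by unfold kS; omega)).2.1]
    unfold kS kT; split_ifs <;> omega
  · rw [DQ_odd K n i j hi hj, DQ_even K n i (j+1) hi (by omega),
      (SF_spec K n i hi _ (by unfold kS; omega)).1, (TF_spec K n i hi _ (by unfold kT; omega)).2.1]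
    unfold kS kT; split_ifs <;> omega

theorem exact_j (i j : ℕ) (hi : 1 ≤ i) (hin : i ≤ n) (h : (DQ K n i (j+1)).cols = (DQ K n i j).rows)
    (v : Fin (DQ K n i (j+1)).cols → B K n) :
    Matrix.vecMul (v ∘ Fin.cast h.symm) (DQ K n i j).M = 0 ↔
      ∃ w : Fin (DQ K n i (j+1)).rows → B K n, v = Matrix.vecMul w (DQ K n i (j+1)).M := by
  by_cases hj : j % 2 = 0
  · have e1 := DQ_even K n i j hi hj
    have e2 := DQ_odd K n i (j+1) hi (by omega)
    generalize DQ K n i j = P at *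
    generalize DQ K n i (j+1) = Q at *
    subst e1 e2
    have b1 : 2 * kS i j ≤ i + 1 := by unfold kS; omega
    have b2 : 2 * kT i (j+1) ≤ i := by unfold kT; omega
    have s1 := SF_spec K n i hi _ b1
    rw [ker_iff _ _ (SF_mul K n i hi _ b1) h v, im_iff _ _ (TF_mul K n i hi _ b2) v, s1.1]
    exact exS K n i hi hin _ _ _ b1 (by unfold kS; omega) (h.trans s1.2.1)
  · have e1 := DQ_odd K n i j hi hj
    have e2 := DQ_even K n i (j+1) hi (by omega)
    generalize DQ K n i j = P at *
    generalize DQ K n i (j+1) = Q at *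
    subst e1 e2
    have b1 : 2 * kT i j ≤ i := by unfold kT; omega
    have b2 : 2 * kS i (j+1) ≤ i + 1 := by unfold kS; omega
    have s1 := TF_spec K n i hi _ b1
    rw [ker_iff _ _ (TF_mul K n i hi _ b1) h v, im_iff _ _ (SF_mul K n i hi _ b2) v, s1.1]
    exact exT K n i hi hin _ _ _ b1 (h.trans s1.2.1)

theorem exact_0 (i : ℕ) (hi : 1 ≤ i) (hin : i ≤ n) (h : (DQ K n i 0).cols = 2) (w x : B K n) :
    (w * bB K n i + x * cB K n ((i : ℤ) - 1)) = 0 ↔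
      ∃ u : Fin (DQ K n i 0).rows → B K n,
        w = Matrix.vecMul u (DQ K n i 0).M (Fin.cast h.symm 0) ∧
        x = Matrix.vecMul u (DQ K n i 0).M (Fin.cast h.symm 1) := by
  have e1 := DQ_even K n i 0 hi rfl
  have hk : kS i 0 = 1 := by unfold kS; omega
  rw [hk] at e1
  generalize DQ K n i 0 = P at *
  subst e1
  have hm := SF_mul K n i hi 1 (by omega)
  have key := exT K n i hi hin (fun t => if t = 0 then w else x) 0 2 (by omega) (by rw [if_neg (by omega)])
  have l : (∀ c < 0 + 1, FT K n i (fun t => if t = 0 then w else x) c = 0) ↔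
      (w * bB K n i + x * cB K n ((i : ℤ) - 1)) = 0 := by
    simp [FT]
  rw [← l, key]
  constructor
  · rintro ⟨U, hU⟩
    refine ⟨fun r => U r.val, ?_, ?_⟩
    · rw [hm]; simpa using hU 0 (by omega)
    · rw [hm]; simpa using hU 1 (by omega)
  · rintro ⟨u, h1, h2⟩
    rw [← ext0_val u, hm] at h1 h2
    refine ⟨ext0 u, fun c hc => ?_⟩
    have : c = 0 ∨ c = 1 := by omega
    rcases this with rfl | rfl
    · simpa using h1
    · simpa using h2

end Aux14

/-- Lemma 3.7.  For `1 ≤ i ≤ n`, the eventually periodic complex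
`⋯ → F₃ → F₂ → F₁ = B² → B b_i + B c_{i−1} → 0` with augmentation
`(w,x) ↦ w b_i + x c_{i−1}` and differentials `S_{i,i−1}, T_{i,i−2}, S_{i,i−3}, …`
(eventually `2`-periodic as in `DQ`) is a free resolution of the left ideal
`B b_i + B c_{i−1}`. -/
theorem stmt_14 (K : Type) [Field K] (n : ℕ) (i : ℕ) (h1 : 1 ≤ i) (h2 : i ≤ n) :
    -- the complex is well formed: consecutive matrices are composable, and `F₁ = B²`
    (∀ j, (DQ K n i (j+1)).cols = (DQ K n i j).rows) ∧
    (DQ K n i 0).cols = 2 ∧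
    -- the augmentation maps onto `B b_i + B c_{i−1}`
    (∀ y, y ∈ Ideal.span {bB K n i} + Ideal.span {cB K n ((i : ℤ) - 1)} ↔
      ∃ w x : B K n, y = w * bB K n i + x * cB K n ((i : ℤ) - 1)) ∧
    -- exactness at `F₁ = B²`: ker(augmentation) = im(first differential)
    (∀ h : (DQ K n i 0).cols = 2, ∀ w x : B K n,
      (w * bB K n i + x * cB K n ((i : ℤ) - 1)) = 0 ↔
      ∃ u : Fin (DQ K n i 0).rows → B K n,
        w = Matrix.vecMul u (DQ K n i 0).M (Fin.cast h.symm 0) ∧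
        x = Matrix.vecMul u (DQ K n i 0).M (Fin.cast h.symm 1)) ∧
    -- exactness at `F_{j+2}`: ker of the `(j+1)`-st differential = im of the `(j+2)`-nd
    (∀ j (h : (DQ K n i (j+1)).cols = (DQ K n i j).rows)
        (v : Fin (DQ K n i (j+1)).cols → B K n),
      Matrix.vecMul (v ∘ Fin.cast h.symm) (DQ K n i j).M = 0 ↔
      ∃ w : Fin (DQ K n i (j+1)).rows → B K n, v = Matrix.vecMul w (DQ K n i (j+1)).M) := by
  refine ⟨fun j => Aux14.rows_cols K n i j h1, ?_, ?_, ?_, ?_⟩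
  · rw [Aux14.DQ_even K n i 0 h1 rfl, (Aux14.SF_spec K n i h1 _ (by unfold Aux14.kS; omega)).1]
    unfold Aux14.kS; omega
  · intro y
    rw [Submodule.add_eq_sup, ← Ideal.span_insert, Ideal.mem_span_pair]
    constructor
    · rintro ⟨w, x, h⟩; exact ⟨w, x, h.symm⟩
    · rintro ⟨w, x, h⟩; exact ⟨w, x, h.symm⟩
  · intro h w x
    exact Aux14.exact_0 K n i h1 h2 h w x
  · intro j h v
    exact Aux14.exact_j K n i j h1 h2 h v
end
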